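/- arXiv:1311.0782 — 2 statements merged into one kernel-verified Lean document; each statement's English description precedes it below -/
import Mathlib

section
/- Let C be a set of (two-colored) partitions closed under horizontal concatenation, vertical concatenation (when colorings match), reflection, and rotation, containing the identity partition. If p ∈ C is a projective partition and q is obtained from p by capping symmetrically (removing the same consecutive points on the upper and lower rows using a one-block partition b ∈ C and joining the affected blocks), and t(q) = t(p), then q is equivalent to p in C, i.e., there exists r ∈ C with r*∘r = p and r∘r* = q. -/
open scoped Classical

/-- A two-colored partition with `k` upper and `l` lower points; `true` = white. -/
structure CPartition where
  k : ℕ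
  l : ℕ
  uc : Fin k → Bool
  lc : Fin l → Bool
  rel : Setoid (Fin k ⊕ Fin l)

namespace CPartition

/-- The disjoint union of two setoids. -/
def sumSetoid {X Y : Type*} (p : Setoid X) (q : Setoid Y) : Setoid (X ⊕ Y) where
  r := Sum.LiftRel p.r q.r
  iseqv := by
    refine ⟨fun x => ?_, fun h => ?_, fun h h' => ?_⟩
    · cases x with
      | inl a => exact Sum.LiftRel.inl (p.iseqv.refl a)
      | inr b => exact Sum.LiftRel.inr (q.iseqv.refl b)
    · cases h with
      | inl h => exact Sum.LiftRel.inl (p.iseqv.symm h)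
      | inr h => exact Sum.LiftRel.inr (q.iseqv.symm h)
    · cases h with
      | inl h =>
        cases h' with
        | inl h' => exact Sum.LiftRel.inl (p.iseqv.trans h h')
      | inr h =>
        cases h' with
        | inr h' => exact Sum.LiftRel.inr (q.iseqv.trans h h')

/-- Horizontal concatenation `p ⊗ q`. -/
def tensor (p q : CPartition) : CPartition where
  k := p.k + q.k
  l := p.l + q.l
  uc := fun i => Sum.elim p.uc q.uc (finSumFinEquiv.symm i)
  lc := fun j => Sum.elim p.lc q.lc (finSumFinEquiv.symm j)
  rel := Setoid.comap
    (fun x => Equiv.sumSumSumComm (Fin p.k) (Fin q.k) (Fin p.l) (Fin q.l)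
      (Sum.map (fun i => finSumFinEquiv.symm i) (fun j => finSumFinEquiv.symm j) x))
    (sumSetoid p.rel q.rel)

/-- Reflection `p*` (exchange the two rows, keeping colors). -/
def reflect (p : CPartition) : CPartition where
  k := p.l
  l := p.k
  uc := p.lc
  lc := p.uc
  rel := Setoid.comap Sum.swap p.rel

/-- The conjugate partition `p̄` : rotate all upper points to the lower row and
conversely (order is reversed and colors are switched). -/
def conj (p : CPartition) : CPartition where
  k := p.l
  l := p.k
  uc := fun i => !(p.lc i.rev)
  lc := fun j => !(p.uc j.rev)
  rel := Setoid.comap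
    (Sum.elim (fun i => Sum.inr i.rev) (fun j => Sum.inl j.rev)) p.rel

/-- Vertical concatenation: `p` on top, then `q` below (requires `p.l = q.k`).
Points of the middle row are identified and removed, blocks being joined along them. -/
def vcomp (p q : CPartition) (h : p.l = q.k) : CPartition where
  k := p.k
  l := q.l
  uc := p.uc
  lc := q.lc
  rel := Setoid.comap (Sum.map id Sum.inr)
    (Relation.EqvGen.setoid (fun x y : Fin p.k ⊕ (Fin p.l ⊕ Fin q.l) =>
      (∃ a b, p.rel.r a b ∧ Sum.map id Sum.inl a = x ∧ Sum.map id Sum.inl b = y) ∨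
      (∃ a b, q.rel.r a b ∧
        Sum.inr (Sum.map (Fin.cast h.symm) id a) = x ∧
        Sum.inr (Sum.map (Fin.cast h.symm) id b) = y)))

/-- Rotation: move the leftmost upper point to the leftmost lower position,
switching its color. -/
def rotDown (p : CPartition) (m : ℕ) (h : p.k = m + 1) : CPartition where
  k := m
  l := p.l + 1
  uc := fun i => p.uc (Fin.cast h.symm i.succ)
  lc := fun j => Fin.cases (!(p.uc (Fin.cast h.symm 0))) p.lc j
  rel := Setoid.comap
    (Sum.elim (fun i => Sum.inl (Fin.cast h.symm i.succ))
      (fun j => Fin.cases (Sum.inl (Fin.cast h.symm (0 : Fin (m + 1))))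
        (fun j' => Sum.inr j') j)) p.rel

/-- Rotation: move the leftmost lower point to the leftmost upper position,
switching its color. -/
def rotUp (p : CPartition) (m : ℕ) (h : p.l = m + 1) : CPartition where
  k := p.k + 1
  l := m
  uc := fun i => Fin.cases (!(p.lc (Fin.cast h.symm 0))) p.uc i
  lc := fun j => p.lc (Fin.cast h.symm j.succ)
  rel := Setoid.comap
    (Sum.elim (fun i => Fin.cases (Sum.inr (Fin.cast h.symm (0 : Fin (m + 1))))
        (fun i' => Sum.inl i') i)
      (fun j => Sum.inr (Fin.cast h.symm j.succ))) p.rel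

/-- The identity partition with coloring `c`. -/
def idPart {n : ℕ} (c : Fin n → Bool) : CPartition where
  k := n
  l := n
  uc := c
  lc := c
  rel := Setoid.ker (Sum.elim id id)

/-- A block (class) of `p` is a through-block when it contains both an upper
and a lower point. -/
def IsThrough (p : CPartition) (c : Quotient p.rel) : Prop :=
  (∃ i : Fin p.k, Quotient.mk p.rel (Sum.inl i) = c) ∧
    (∃ j : Fin p.l, Quotient.mk p.rel (Sum.inr j) = c)

/-- The number `t(p)` of through-blocks of `p`. -/
noncomputable def t (p : CPartition) : ℕ := Nat.card {c : Quotient p.rel // p.IsThrough c}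

/-- A projective partition: `pp = p = p*`. -/
def IsProjective (p : CPartition) : Prop :=
  ∃ h : p.l = p.k, vcomp p p h = p ∧ reflect p = p

/-- Equivalence of projective partitions in `C` : `p ∼ q` iff `r*r = p`, `rr* = q`
for some `r ∈ C`. -/
def EquivIn (C : Set CPartition) (p q : CPartition) : Prop :=
  ∃ r ∈ C, vcomp r (reflect r) rfl = p ∧ vcomp (reflect r) r rfl = q

/-- Position of a point in the counterclockwise planar order. -/
def ptIdx (p : CPartition) : Fin p.k ⊕ Fin p.l → ℕ :=
  Sum.elim (fun i => (i : ℕ)) (fun j => p.k + (p.l - 1 - (j : ℕ)))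

/-- A partition is noncrossing when its strings can be drawn without crossings. -/
def NonCrossing (p : CPartition) : Prop :=
  ∀ a b c d : Fin p.k ⊕ Fin p.l,
    p.ptIdx a < p.ptIdx b → p.ptIdx b < p.ptIdx c → p.ptIdx c < p.ptIdx d →
    p.rel.r a c → p.rel.r b d → p.rel.r a b

/-- The one-block projective partition on `k + k` points, all colored `c`. -/
def piP (k : ℕ) (c : Bool) : CPartition :=
  ⟨k, k, fun _ => c, fun _ => c, ⊤⟩

/-- `π_k` for `k ∈ ℤ \ {0}` : one block, `|k| + |k|` points, white if `k > 0`,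
black if `k < 0`. -/
def piZ (k : ℤ) : CPartition := piP k.natAbs (decide (0 < k))

/-- `π_{0⁺}`, the one-block projective partition with rows colored white–black. -/
def pi0plus : CPartition :=
  ⟨2, 2, ![true, false], ![true, false], ⊤⟩

/-- `θ_k` : one block of `k` points of color `c` on one row. -/
def thetaP (k : ℕ) (c : Bool) : CPartition :=
  ⟨k, 0, fun _ => c, Fin.elim0, ⊤⟩

/-- `β_k = θ_k* θ_k` : one upper block and one lower block of `k` points each,
all of color `c`. -/
def betaP (k : ℕ) (c : Bool) : CPartition :=
  ⟨k, k, fun _ => c, fun _ => c, sumSetoid ⊤ ⊤⟩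

/-- `β_k` for `k : ℤ` (white if `k > 0`, black if `k < 0`, empty if `k = 0`). -/
def betaZ (k : ℤ) : CPartition := betaP k.natAbs (decide (0 < k))

/-- Tensor powers, `tpow p 0` being the empty partition. -/
def tpow (p : CPartition) : ℕ → CPartition
  | 0 => betaP 0 true
  | m + 1 => tensor (tpow p m) p

end CPartition

open CPartition

/-- A category of two-colored partitions: a class of partitions containing the
white identity and stable under horizontal concatenation, vertical concatenation
(when the colorings match), reflection and rotations. -/
structure PartitionCategory where
  mem : Set CPartition
  id_mem : idPart (fun _ : Fin 1 => true) ∈ mem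
  tensor_mem : ∀ p q, p ∈ mem → q ∈ mem → tensor p q ∈ mem
  vcomp_mem : ∀ p q (h : p.l = q.k), p ∈ mem → q ∈ mem →
    (∀ j, p.lc j = q.uc (Fin.cast h j)) → vcomp p q h ∈ mem
  reflect_mem : ∀ p, p ∈ mem → reflect p ∈ mem
  rotDown_mem : ∀ p, p ∈ mem → ∀ m (h : p.k = m + 1), rotDown p m h ∈ mem
  rotUp_mem : ∀ p, p ∈ mem → ∀ m (h : p.l = m + 1), rotUp p m h ∈ mem

namespace CPartition

/-- Glue together all classes of `R` meeting `M`. -/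
def glue {X : Type*} (R : Setoid X) (M : X → Prop) : Setoid X where
  r x y := R.r x y ∨ ((∃ m, M m ∧ R.r x m) ∧ ∃ m, M m ∧ R.r y m)
  iseqv := by
    have hs : ∀ {a b}, R.r a b → R.r b a := fun h => R.iseqv.symm h
    have ht : ∀ {a b c}, R.r a b → R.r b c → R.r a c := fun h h' => R.iseqv.trans h h'
    refine ⟨fun x => Or.inl (R.iseqv.refl x), fun h => ?_, fun h h' => ?_⟩
    · rcases h with h | ⟨h, h'⟩
      · exact Or.inl (hs h)
      · exact Or.inr ⟨h', h⟩
    · rcases h with h | ⟨⟨m, hm, h1⟩, ⟨m', hm', h2⟩⟩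
      · rcases h' with h' | ⟨⟨m, hm, h1⟩, h2⟩
        · exact Or.inl (ht h h')
        · exact Or.inr ⟨⟨m, hm, ht h h1⟩, h2⟩
      · rcases h' with h' | ⟨_, h4⟩
        · exact Or.inr ⟨⟨m, hm, h1⟩, ⟨m', hm', ht (hs h') h2⟩⟩
        · exact Or.inr ⟨⟨m, hm, h1⟩, h4⟩

def gf (j n l' : ℕ) (i : Fin l') : Fin (l' + n) :=
  ⟨if i.val < j then i.val else i.val + n, by split <;> omega⟩

def gm (j n : ℕ) {k N : ℕ} : Fin k ⊕ Fin N → Prop :=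
  Sum.elim (fun _ => False) (fun x => j ≤ x.val ∧ x.val < j + n)

def cut (P : CPartition) (j n l' : ℕ) (h : P.l = l' + n) : CPartition :=
  ⟨P.k, l', P.uc, fun i => P.lc (Fin.cast h.symm (gf j n l' i)),
    Setoid.comap (Sum.map id (fun i => Fin.cast h.symm (gf j n l' i)))
      (glue P.rel (gm j n))⟩

theorem mk_congr {k l : ℕ} {uc uc' : Fin k → Bool} {lc lc' : Fin l → Bool}
    {r r' : Setoid (Fin k ⊕ Fin l)} (h1 : uc = uc') (h2 : lc = lc')
    (h3 : ∀ x y, r.r x y ↔ r'.r x y) :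
    (⟨k, l, uc, lc, r⟩ : CPartition) = ⟨k, l, uc', lc', r'⟩ := by
  subst h1 h2
  have : r = r' := Setoid.ext h3
  rw [this]

theorem reflect_reflect (p : CPartition) : reflect (reflect p) = p := by
  obtain ⟨k, l, uc, lc, r⟩ := p
  refine mk_congr rfl rfl fun x y => ?_
  rcases x with x | x <;> rcases y with y | y <;> exact Iff.rfl

/-- The middle relation used in `vcomp`. -/
def mid (p q : CPartition) (h : p.l = q.k) : Setoid (Fin p.k ⊕ (Fin p.l ⊕ Fin q.l)) :=
  Relation.EqvGen.setoid (fun x y : Fin p.k ⊕ (Fin p.l ⊕ Fin q.l) =>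
      (∃ a b, p.rel.r a b ∧ Sum.map id Sum.inl a = x ∧ Sum.map id Sum.inl b = y) ∨
      (∃ a b, q.rel.r a b ∧
        Sum.inr (Sum.map (Fin.cast h.symm) id a) = x ∧
        Sum.inr (Sum.map (Fin.cast h.symm) id b) = y))

theorem vcomp_rel (p q : CPartition) (h : p.l = q.k) (x y) :
    (vcomp p q h).rel.r x y ↔ (mid p q h).r (Sum.map id Sum.inr x) (Sum.map id Sum.inr y) :=
  Iff.rfl

theorem mid_left (p q : CPartition) (h : p.l = q.k) {a b} (hab : p.rel.r a b) :
    (mid p q h).r (Sum.map id Sum.inl a) (Sum.map id Sum.inl b) :=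
  Relation.EqvGen.rel _ _ (Or.inl ⟨a, b, hab, rfl, rfl⟩)

theorem mid_right (p q : CPartition) (h : p.l = q.k) {a b} (hab : q.rel.r a b) :
    (mid p q h).r (Sum.inr (Sum.map (Fin.cast h.symm) id a))
      (Sum.inr (Sum.map (Fin.cast h.symm) id b)) :=
  Relation.EqvGen.rel _ _ (Or.inr ⟨a, b, hab, rfl, rfl⟩)

theorem mid_le (p q : CPartition) (h : p.l = q.k) (S : Setoid (Fin p.k ⊕ (Fin p.l ⊕ Fin q.l)))
    (h1 : ∀ a b, p.rel.r a b → S.r (Sum.map id Sum.inl a) (Sum.map id Sum.inl b))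
    (h2 : ∀ a b, q.rel.r a b → S.r (Sum.inr (Sum.map (Fin.cast h.symm) id a))
      (Sum.inr (Sum.map (Fin.cast h.symm) id b))) {x y} (hxy : (mid p q h).r x y) : S.r x y := by
  induction hxy with
  | rel x y hxy =>
    rcases hxy with ⟨a, b, hab, rfl, rfl⟩ | ⟨a, b, hab, rfl, rfl⟩
    · exact h1 _ _ hab
    · exact h2 _ _ hab
  | refl x => exact S.iseqv.refl x
  | symm x y _ ih => exact S.iseqv.symm ih
  | trans x y z _ _ ih ih' => exact S.iseqv.trans ih ih'

/-- The relation of `A A*`. -/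
theorem dbl_rel (A : CPartition) (x y : Fin A.k ⊕ Fin A.k) :
    (vcomp A (reflect A) rfl).rel.r x y ↔
      A.rel.r (Sum.inl (Sum.elim id id x)) (Sum.inl (Sum.elim id id y)) ∧
      (x.isLeft = y.isLeft ∨ ∃ m, A.rel.r (Sum.inl (Sum.elim id id x)) (Sum.inr m)) := by
  have hr : ∀ a, A.rel.r a a := fun a => A.rel.iseqv.refl a
  have hs : ∀ {a b}, A.rel.r a b → A.rel.r b a := fun h => A.rel.iseqv.symm h
  have ht : ∀ {a b c}, A.rel.r a b → A.rel.r b c → A.rel.r a c :=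
    fun h h' => A.rel.iseqv.trans h h'
  show (mid A (reflect A) rfl).r (Sum.map id Sum.inr x) (Sum.map id Sum.inr y) ↔ _
  constructor
  · intro h
    let φ : Fin A.k ⊕ (Fin A.l ⊕ Fin A.k) → Fin A.k ⊕ Fin A.l :=
      Sum.elim Sum.inl (Sum.elim Sum.inr Sum.inl)
    let σ : Fin A.k ⊕ (Fin A.l ⊕ Fin A.k) → Bool := Sum.isLeft
    let S : Setoid (Fin A.k ⊕ (Fin A.l ⊕ Fin A.k)) :=
      { r := fun u v => A.rel.r (φ u) (φ v) ∧ (σ u = σ v ∨ ∃ m, A.rel.r (φ u) (Sum.inr m))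
        iseqv := by
          refine ⟨fun u => ⟨hr _, Or.inl rfl⟩, fun {u v} h => ⟨hs h.1, ?_⟩,
            fun {u v w} h h' => ⟨ht h.1 h'.1, ?_⟩⟩
          · rcases h.2 with h2 | ⟨m, hm⟩
            · exact Or.inl h2.symm
            · exact Or.inr ⟨m, ht (hs h.1) hm⟩
          · rcases h.2 with h2 | ⟨m, hm⟩
            · rcases h'.2 with h2' | ⟨m, hm⟩
              · exact Or.inl (h2.trans h2')
              · exact Or.inr ⟨m, ht h.1 hm⟩
            · exact Or.inr ⟨m, hm⟩ }
    have := mid_le A (reflect A) rfl S ?_ ?_ h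
    · rcases x with x | x <;> rcases y with y | y <;> exact this
    · rintro (a | a) (b | b) hab
      · exact ⟨hab, Or.inl rfl⟩
      · exact ⟨hab, Or.inr ⟨_, hab⟩⟩
      · exact ⟨hab, Or.inr ⟨_, hr _⟩⟩
      · exact ⟨hab, Or.inl rfl⟩
    · rintro (a | a) (b | b) hab
      · exact ⟨hab, Or.inl rfl⟩
      · exact ⟨hab, Or.inl rfl⟩
      · exact ⟨hab, Or.inl rfl⟩
      · exact ⟨hab, Or.inl rfl⟩
  · have key1 : ∀ {a b}, A.rel.r a b → (mid A (reflect A) rfl).r (Sum.map id Sum.inl a)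
        (Sum.map id Sum.inl b) := fun h => mid_left _ _ _ h
    have key2 : ∀ {a b}, A.rel.r a b → (mid A (reflect A) rfl).r
        (Sum.inr a.swap) (Sum.inr b.swap) := by
      intro a b h
      have := mid_right A (reflect A) rfl (a := a.swap) (b := b.swap) (by
        show A.rel.r _ _
        simpa using h)
      rcases a with a | a <;> rcases b with b | b <;> exact this
    have hms : ∀ {a b}, (mid A (reflect A) rfl).r a b → (mid A (reflect A) rfl).r b a :=
      fun h => (mid A (reflect A) rfl).iseqv.symm h
    have hmt : ∀ {a b c}, (mid A (reflect A) rfl).r a b → (mid A (reflect A) rfl).r b c →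
      (mid A (reflect A) rfl).r a c := fun h h' => (mid A (reflect A) rfl).iseqv.trans h h'
    rcases x with x | x <;> rcases y with y | y <;> rintro ⟨h1, h2⟩
    · exact key1 h1
    · rcases h2 with h2 | ⟨m, hm⟩
      · simp at h2
      · exact hmt (key1 hm) (key2 (ht (hs hm) h1))
    · rcases h2 with h2 | ⟨m, hm⟩
      · simp at h2
      · exact hmt (key2 hm) (key1 (ht (hs hm) h1))
    · exact key2 h1

theorem vcomp_reflect (A B : CPartition) (h : (reflect A).l = (reflect B).k) (h' : B.l = A.k) :
    vcomp (reflect A) (reflect B) h = reflect (vcomp B A h') := by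
  obtain ⟨ak, al, au, av, ar⟩ := A
  obtain ⟨bk, bl, bu, bv, br⟩ := B
  dsimp only at h'
  subst h'
  refine mk_congr rfl rfl fun x y => ?_
  let A : CPartition := ⟨bl, al, au, av, ar⟩
  let B : CPartition := ⟨bk, bl, bu, bv, br⟩
  let sw : Fin al ⊕ (Fin bl ⊕ Fin bk) → Fin bk ⊕ (Fin bl ⊕ Fin al) :=
    Sum.elim (Sum.inr ∘ Sum.inr) (Sum.elim (Sum.inr ∘ Sum.inl) Sum.inl)
  let sw' : Fin bk ⊕ (Fin bl ⊕ Fin al) → Fin al ⊕ (Fin bl ⊕ Fin bk) :=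
    Sum.elim (Sum.inr ∘ Sum.inr) (Sum.elim (Sum.inr ∘ Sum.inl) Sum.inl)
  have kA : ∀ {a b}, A.rel.r a b → (reflect A).rel.r a.swap b.swap := by
    rintro (a | a) (b | b) h <;> exact h
  have kB : ∀ {a b}, B.rel.r a b → (reflect B).rel.r a.swap b.swap := by
    rintro (a | a) (b | b) h <;> exact h
  show (mid (reflect A) (reflect B) rfl).r _ _ ↔ (mid B A rfl).r _ _
  constructor
  · intro hh
    have := mid_le (reflect A) (reflect B) rfl (Setoid.comap sw (mid B A rfl)) ?_ ?_ hh
    · rcases x with x | x <;> rcases y with y | y <;> exact this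
    · rintro (a | a) (b | b) hab <;> exact mid_right B A rfl (a := Sum.swap _) (b := Sum.swap _) hab
    · rintro (a | a) (b | b) hab <;> exact mid_left B A rfl (a := Sum.swap _) (b := Sum.swap _) hab
  · intro hh
    have := mid_le B A rfl (Setoid.comap sw' (mid (reflect A) (reflect B) rfl)) ?_ ?_ hh
    · rcases x with x | x <;> rcases y with y | y <;> exact this
    · rintro (a | a) (b | b) hab <;>
        exact mid_right (reflect A) (reflect B) rfl (kB hab)
    · rintro (a | a) (b | b) hab <;>
        exact mid_left (reflect A) (reflect B) rfl (kA hab)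

end CPartition
namespace CPartition

theorem gf_inj (j n l' : ℕ) (i i' : Fin l') (h : gf j n l' i = gf j n l' i') : i = i' := by
  have := congrArg Fin.val h
  simp only [gf] at this
  apply Fin.ext
  split_ifs at this <;> omega

theorem gf_not_mem (j n l' : ℕ) (i : Fin l') :
    ¬ (j ≤ (gf j n l' i).val ∧ (gf j n l' i).val < j + n) := by
  simp only [gf]
  split_ifs <;> omega

theorem gf_surj (j n l' : ℕ) (hj : j ≤ l') (x : Fin (l' + n))
    (h : ¬ (j ≤ x.val ∧ x.val < j + n)) : ∃ i, gf j n l' i = x := by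
  by_cases hx : x.val < j
  · refine ⟨⟨x.val, by omega⟩, Fin.ext ?_⟩
    simp [gf, hx]
  · refine ⟨⟨x.val - n, by omega⟩, Fin.ext ?_⟩
    have : ¬ (x.val - n < j) := by omega
    simp only [gf, this, if_false]
    omega

theorem vcomp_eq_cut (P Q : CPartition) (h : P.l = Q.k) (j n : ℕ) (hn : P.l = Q.l + n)
    (F : Fin Q.l → Fin P.l) (hF : F = fun i => Fin.cast hn.symm (gf j n Q.l i))
    (hc : ∀ i, Q.lc i = P.lc (F i))
    (h0 : ∀ x y, Q.rel.r x y → (glue P.rel (gm j n)).r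
      (Sum.inr (Sum.elim (Fin.cast h.symm) F x)) (Sum.inr (Sum.elim (Fin.cast h.symm) F y)))
    (hM : ∀ m m' : Fin P.l, (j ≤ m.val ∧ m.val < j + n) → (j ≤ m'.val ∧ m'.val < j + n) →
      Q.rel.r (Sum.inl (Fin.cast h m)) (Sum.inl (Fin.cast h m')))
    (hT : ∀ i a, (¬ ∃ i', a = Sum.inr (F i')) → P.rel.r a (Sum.inr (F i)) →
      Q.rel.r (Sum.inl (Fin.cast h (F i))) (Sum.inr i))
    (hL : ∀ i i', P.rel.r (Sum.inr (F i)) (Sum.inr (F i')) → Q.rel.r (Sum.inr i) (Sum.inr i') ∨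
      (Q.rel.r (Sum.inl (Fin.cast h (F i))) (Sum.inr i) ∧
        Q.rel.r (Sum.inl (Fin.cast h (F i'))) (Sum.inr i'))) :
    vcomp P Q h = cut P j n Q.l hn := by
  have Finj : ∀ i i', F i = F i' → i = i' := by
    intro i i' hh
    subst hF
    apply gf_inj j n Q.l
    apply Fin.ext
    have := congrArg Fin.val hh
    simpa using this
  have FM : ∀ i, ¬ (j ≤ (F i).val ∧ (F i).val < j + n) := by
    intro i
    subst hF
    exact gf_not_mem j n Q.l i
  refine mk_congr rfl ?_ fun x y => ?_
  · funext i
    rw [hc i, hF]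
  have e : (fun i => Fin.cast hn.symm (gf j n Q.l i)) = F := hF.symm
  show (mid P Q h).r (Sum.map id Sum.inr x) (Sum.map id Sum.inr y) ↔
    (glue P.rel (gm j n)).r (Sum.map id (fun i => Fin.cast hn.symm (gf j n Q.l i)) x)
      (Sum.map id (fun i => Fin.cast hn.symm (gf j n Q.l i)) y)
  rw [e]
  clear e hF
  have ms : ∀ {a b}, (mid P Q h).r a b → (mid P Q h).r b a := fun h' => (mid P Q h).iseqv.symm h'
  have mt : ∀ {a b c}, (mid P Q h).r a b → (mid P Q h).r b c → (mid P Q h).r a c :=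
    fun h' h'' => (mid P Q h).iseqv.trans h' h''
  constructor
  · intro hh
    let φ : Fin P.k ⊕ (Fin P.l ⊕ Fin Q.l) → Fin P.k ⊕ Fin P.l :=
      Sum.elim Sum.inl (fun z => Sum.inr (Sum.elim id F z))
    have := mid_le P Q h (Setoid.comap φ (glue P.rel (gm j n))) ?_ ?_ hh
    · rcases x with x | x <;> rcases y with y | y <;> exact this
    · rintro (a | a) (b | b) hab <;> exact Or.inl hab
    · intro a b hab
      have := h0 a b hab
      rcases a with a | a <;> rcases b with b | b <;> exact this
  · intro hh
    let ψ : Fin P.k ⊕ Fin P.l → Fin P.k ⊕ (Fin P.l ⊕ Fin Q.l) := fun a =>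
      if hx : ∃ i', a = Sum.inr (F i') then Sum.inr (Sum.inr hx.choose) else Sum.map id Sum.inl a
    have ψF : ∀ i, ψ (Sum.inr (F i)) = Sum.inr (Sum.inr i) := by
      intro i
      have hx : ∃ i', (Sum.inr (F i) : Fin P.k ⊕ Fin P.l) = Sum.inr (F i') := ⟨i, rfl⟩
      have := hx.choose_spec
      have h3 := Finj _ _ (Sum.inr.inj this)
      simp only [ψ, dif_pos hx]
      rw [← h3]
    have ψN : ∀ a, (¬ ∃ i', a = Sum.inr (F i')) → ψ a = Sum.map id Sum.inl a := by
      intro a ha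
      simp only [ψ, dif_neg ha]
    have thr : ∀ a i, (¬ ∃ i', a = Sum.inr (F i')) → P.rel.r a (Sum.inr (F i)) →
        (mid P Q h).r (ψ a) (ψ (Sum.inr (F i))) := by
      intro a i ha hai
      rw [ψN a ha, ψF]
      exact mt (mid_left P Q h hai) (mid_right P Q h (hT i a ha hai))
    have le1 : ∀ a b, P.rel.r a b → (mid P Q h).r (ψ a) (ψ b) := by
      intro a b hab
      by_cases ha : ∃ i', a = Sum.inr (F i')
      · by_cases hb : ∃ i', b = Sum.inr (F i')
        · obtain ⟨i, rfl⟩ := ha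
          obtain ⟨i', rfl⟩ := hb
          rw [ψF, ψF]
          rcases hL i i' hab with h1 | ⟨h1, h2⟩
          · exact mid_right P Q h h1
          · exact mt (ms (mid_right P Q h h1)) (mt (mid_left P Q h hab) (mid_right P Q h h2))
        · obtain ⟨i, rfl⟩ := ha
          exact ms (thr b i hb (P.rel.iseqv.symm hab))
      · by_cases hb : ∃ i', b = Sum.inr (F i')
        · obtain ⟨i, rfl⟩ := hb
          exact thr a i ha hab
        · rw [ψN a ha, ψN b hb]
          exact mid_left P Q h hab
    have ψM : ∀ m m' : Fin P.k ⊕ Fin P.l, gm j n m → gm j n m' → (mid P Q h).r (ψ m) (ψ m') := by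
      rintro (m | m) (m' | m') hm hm'
      · exact hm.elim
      · exact hm.elim
      · exact hm'.elim
      · rw [ψN, ψN]
        · exact mid_right P Q h (hM m m' hm hm')
        · rintro ⟨i, hi⟩
          rw [Sum.inr.inj hi] at hm'
          exact FM i hm'
        · rintro ⟨i, hi⟩
          rw [Sum.inr.inj hi] at hm
          exact FM i hm
    have le2 : ∀ a b, (glue P.rel (gm j n)).r a b → (mid P Q h).r (ψ a) (ψ b) := by
      rintro a b (hab | ⟨⟨m, hm, h1⟩, ⟨m', hm', h2⟩⟩)
      · exact le1 _ _ hab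
      · exact mt (le1 _ _ h1) (mt (ψM m m' hm hm') (ms (le1 _ _ h2)))
    have := le2 _ _ hh
    have e2 : ∀ x : Fin P.k ⊕ Fin Q.l, ψ (Sum.map id F x) = Sum.map id Sum.inr x := by
      rintro (x | x)
      · exact ψN _ (by simp)
      · exact ψF x
    have h1 := e2 x
    have h2 := e2 y
    exact h1 ▸ h2 ▸ this

def capP {j1 j2 n : ℕ} (c1 : Fin j1 → Bool) (c2 : Fin j2 → Bool) (ub : Fin n → Bool)
    (lb : Fin 0 → Bool) : CPartition :=
  tensor (tensor (idPart c1) ⟨n, 0, ub, lb, ⊤⟩) (idPart c2)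

theorem tensor_left (p q : CPartition) {a b} (h : p.rel.r a b) :
    (tensor p q).rel.r (Sum.map (Fin.castAdd q.k) (Fin.castAdd q.l) a)
      (Sum.map (Fin.castAdd q.k) (Fin.castAdd q.l) b) := by
  have e : ∀ a : Fin p.k ⊕ Fin p.l,
      Equiv.sumSumSumComm (Fin p.k) (Fin q.k) (Fin p.l) (Fin q.l)
      (Sum.map (fun i => finSumFinEquiv.symm i) (fun j => finSumFinEquiv.symm j)
        (Sum.map (Fin.castAdd q.k) (Fin.castAdd q.l) a)) = Sum.inl a := by
    rintro (a | a) <;> simp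
  have h' : Sum.LiftRel p.rel.r q.rel.r (Sum.inl a) (Sum.inl b) := Sum.LiftRel.inl h
  rw [← e a, ← e b] at h'
  exact h'

theorem tensor_uc_left (p q : CPartition) (i : Fin p.k) :
    (tensor p q).uc (Fin.castAdd q.k i) = p.uc i := by
  show Sum.elim p.uc q.uc (finSumFinEquiv.symm (Fin.castAdd q.k i)) = _
  simp

theorem tensor_lc_left (p q : CPartition) (i : Fin p.l) :
    (tensor p q).lc (Fin.castAdd q.l i) = p.lc i := by
  show Sum.elim p.lc q.lc (finSumFinEquiv.symm (Fin.castAdd q.l i)) = _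
  simp

theorem tensor_right (p q : CPartition) {a b} (h : q.rel.r a b) :
    (tensor p q).rel.r (Sum.map (Fin.natAdd p.k) (Fin.natAdd p.l) a)
      (Sum.map (Fin.natAdd p.k) (Fin.natAdd p.l) b) := by
  have e : ∀ a : Fin q.k ⊕ Fin q.l,
      Equiv.sumSumSumComm (Fin p.k) (Fin q.k) (Fin p.l) (Fin q.l)
      (Sum.map (fun i => finSumFinEquiv.symm i) (fun j => finSumFinEquiv.symm j)
        (Sum.map (Fin.natAdd p.k) (Fin.natAdd p.l) a)) = Sum.inr a := by
    rintro (a | a) <;> simp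
  have h' : Sum.LiftRel p.rel.r q.rel.r (Sum.inr a) (Sum.inr b) := Sum.LiftRel.inr h
  rw [← e a, ← e b] at h'
  exact h'

theorem tensor_uc_right (p q : CPartition) (i : Fin q.k) :
    (tensor p q).uc (Fin.natAdd p.k i) = q.uc i := by
  show Sum.elim p.uc q.uc (finSumFinEquiv.symm (Fin.natAdd p.k i)) = _
  simp

theorem tensor_lc_right (p q : CPartition) (i : Fin q.l) :
    (tensor p q).lc (Fin.natAdd p.l i) = q.lc i := by
  show Sum.elim p.lc q.lc (finSumFinEquiv.symm (Fin.natAdd p.l i)) = _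
  simp

theorem tensor_cases (p q : CPartition) (x : Fin (p.k + q.k) ⊕ Fin (p.l + q.l)) :
    (∃ a, x = Sum.map (Fin.castAdd q.k) (Fin.castAdd q.l) a ∧
      Equiv.sumSumSumComm (Fin p.k) (Fin q.k) (Fin p.l) (Fin q.l)
      (Sum.map (fun i => finSumFinEquiv.symm i) (fun j => finSumFinEquiv.symm j) x) = Sum.inl a) ∨
    (∃ a, x = Sum.map (Fin.natAdd p.k) (Fin.natAdd p.l) a ∧
      Equiv.sumSumSumComm (Fin p.k) (Fin q.k) (Fin p.l) (Fin q.l)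
      (Sum.map (fun i => finSumFinEquiv.symm i) (fun j => finSumFinEquiv.symm j) x) =
        Sum.inr a) := by
  rcases x with x | x
  · refine Fin.addCases (fun x => ?_) (fun x => ?_) x
    · exact Or.inl ⟨Sum.inl x, rfl, by simp⟩
    · exact Or.inr ⟨Sum.inl x, rfl, by simp⟩
  · refine Fin.addCases (fun x => ?_) (fun x => ?_) x
    · exact Or.inl ⟨Sum.inr x, rfl, by simp⟩
    · exact Or.inr ⟨Sum.inr x, rfl, by simp⟩

theorem tensor_elim (p q : CPartition) (x y : Fin (p.k + q.k) ⊕ Fin (p.l + q.l))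
    (h : (tensor p q).rel.r x y) :
    (∃ a b, p.rel.r a b ∧ x = Sum.map (Fin.castAdd q.k) (Fin.castAdd q.l) a ∧
      y = Sum.map (Fin.castAdd q.k) (Fin.castAdd q.l) b) ∨
    (∃ a b, q.rel.r a b ∧ x = Sum.map (Fin.natAdd p.k) (Fin.natAdd p.l) a ∧
      y = Sum.map (Fin.natAdd p.k) (Fin.natAdd p.l) b) := by
  have h' : Sum.LiftRel p.rel.r q.rel.r
    (Equiv.sumSumSumComm (Fin p.k) (Fin q.k) (Fin p.l) (Fin q.l)
      (Sum.map (fun i => finSumFinEquiv.symm i) (fun j => finSumFinEquiv.symm j) x))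
    (Equiv.sumSumSumComm (Fin p.k) (Fin q.k) (Fin p.l) (Fin q.l)
      (Sum.map (fun i => finSumFinEquiv.symm i) (fun j => finSumFinEquiv.symm j) y)) := h
  rcases tensor_cases p q x with ⟨a, ha, ha'⟩ | ⟨a, ha, ha'⟩ <;>
    rcases tensor_cases p q y with ⟨b, hb, hb'⟩ | ⟨b, hb, hb'⟩ <;> rw [ha', hb'] at h'
  · exact Or.inl ⟨a, b, Sum.liftRel_inl_inl.1 h', ha, hb⟩
  · exact (Sum.not_liftRel_inl_inr h').elim
  · exact (Sum.not_liftRel_inr_inl h').elim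
  · exact Or.inr ⟨a, b, Sum.liftRel_inr_inr.1 h', ha, hb⟩

theorem capP_elim {j1 j2 n : ℕ} (c1 : Fin j1 → Bool) (c2 : Fin j2 → Bool) (ub : Fin n → Bool)
    (lb : Fin 0 → Bool) (lab : Fin (j1 + n + j2) ⊕ Fin (j1 + 0 + j2) → ℕ)
    (hlab : lab = Sum.elim (fun i => i.val) (fun i => if i.val < j1 then i.val else i.val + n))
    (x y : Fin (j1 + n + j2) ⊕ Fin (j1 + 0 + j2)) (h : (capP c1 c2 ub lb).rel.r x y) :
    lab x = lab y ∨
      ((j1 ≤ lab x ∧ lab x < j1 + n) ∧ (j1 ≤ lab y ∧ lab y < j1 + n)) := by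
  rcases tensor_elim (tensor (idPart c1) ⟨n, 0, ub, lb, ⊤⟩) (idPart c2) x y h with ⟨a, b, hab, rfl, rfl⟩ | ⟨a, b, hab, rfl, rfl⟩
  · rcases tensor_elim (idPart c1) ⟨n, 0, ub, lb, ⊤⟩ a b hab with
      ⟨a, b, hab2, rfl, rfl⟩ | ⟨a, b, hab2, rfl, rfl⟩
    · have hab' : (Sum.elim id id a : Fin j1) = Sum.elim id id b := hab2
      have la : ∀ a : Fin j1 ⊕ Fin j1, lab (Sum.map (Fin.castAdd j2) (Fin.castAdd j2)
          (Sum.map (Fin.castAdd n) (Fin.castAdd 0) a)) = (Sum.elim id id a : Fin j1).val := by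
        subst hlab
        rintro (a | a)
        · rfl
        · exact if_pos a.isLt
      exact Or.inl ((la a).trans ((congrArg Fin.val hab').trans (la b).symm))
    · have la : ∀ a : Fin n ⊕ Fin 0, j1 ≤ lab (Sum.map (Fin.castAdd j2) (Fin.castAdd j2)
          (Sum.map (Fin.natAdd j1) (Fin.natAdd j1) a)) ∧ lab (Sum.map (Fin.castAdd j2)
          (Fin.castAdd j2) (Sum.map (Fin.natAdd j1) (Fin.natAdd j1) a)) < j1 + n := by
        subst hlab
        rintro (a | a)
        · have := a.isLt
          show j1 ≤ j1 + a.val ∧ j1 + a.val < j1 + n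
          omega
        · exact a.elim0
      exact Or.inr ⟨la a, la b⟩
  · have hab' : (Sum.elim id id a : Fin j2) = Sum.elim id id b := hab
    have la : ∀ a : Fin j2 ⊕ Fin j2, lab (Sum.map (Fin.natAdd (j1 + n)) (Fin.natAdd (j1 + 0)) a)
        = j1 + n + (Sum.elim id id a : Fin j2).val := by
      subst hlab
      rintro (a | a)
      · rfl
      · show (if j1 + a.val < j1 then j1 + a.val else j1 + a.val + n) = j1 + n + a.val
        rw [if_neg (by omega)]
        omega
    exact Or.inl ((la a).trans ((congrArg (fun z : Fin j2 => j1 + n + z.val) hab').trans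
      (la b).symm))

theorem vcomp_cap (P : CPartition) {j1 j2 n : ℕ} (c1 : Fin j1 → Bool) (c2 : Fin j2 → Bool)
    (ub : Fin n → Bool) (lb : Fin 0 → Bool) (h : P.l = (capP c1 c2 ub lb).k)
    (hcol : ∀ j, P.lc j = (capP c1 c2 ub lb).uc (Fin.cast h j)) (hn : P.l = (j1 + j2) + n) :
    vcomp P (capP c1 c2 ub lb) h = cut P j1 n (j1 + j2) hn := by
  have hv : ∀ i : Fin (j1 + j2), (gf j1 n (j1 + j2) i).val =
    if i.val < j1 then i.val else i.val + n := fun i => rfl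
  have thr : ∀ i : Fin (j1 + j2), (capP c1 c2 ub lb).rel.r
      (Sum.inl (Fin.cast h (Fin.cast hn.symm (gf j1 n (j1 + j2) i)))) (Sum.inr i) ∧
      (capP c1 c2 ub lb).lc i = P.lc (Fin.cast hn.symm (gf j1 n (j1 + j2) i)) := by
    intro i
    rw [hcol]
    refine Fin.addCases (fun i => ?_) (fun i => ?_) i
    · have : Fin.cast h (Fin.cast hn.symm (gf j1 n (j1 + j2) (Fin.castAdd j2 i))) =
        (Fin.castAdd j2 (Fin.castAdd n i) : Fin (j1 + n + j2)) := by
        apply Fin.ext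
        simp [gf]
      rw [this]
      refine ⟨tensor_left _ (idPart c2) (tensor_left (idPart c1) ⟨n, 0, ub, lb, ⊤⟩
        (a := Sum.inl i) (b := Sum.inr i) rfl), ?_⟩
      exact (tensor_lc_left (tensor (idPart c1) ⟨n, 0, ub, lb, ⊤⟩) (idPart c2) i).trans
        ((tensor_lc_left (idPart c1) ⟨n, 0, ub, lb, ⊤⟩ i).trans
        ((tensor_uc_left (idPart c1) ⟨n, 0, ub, lb, ⊤⟩ i).symm.trans
        (tensor_uc_left (tensor (idPart c1) ⟨n, 0, ub, lb, ⊤⟩) (idPart c2)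
          (Fin.castAdd n i)).symm))
    · have : Fin.cast h (Fin.cast hn.symm (gf j1 n (j1 + j2) (Fin.natAdd j1 i))) =
        (Fin.natAdd (j1 + n) i : Fin (j1 + n + j2)) := by
        apply Fin.ext
        simp [gf]
        omega
      rw [this]
      refine ⟨tensor_right (tensor (idPart c1) ⟨n, 0, ub, lb, ⊤⟩) (idPart c2)
        (a := Sum.inl i) (b := Sum.inr i) rfl, ?_⟩
      exact (tensor_lc_right (tensor (idPart c1) ⟨n, 0, ub, lb, ⊤⟩) (idPart c2) i).trans
        (tensor_uc_right (tensor (idPart c1) ⟨n, 0, ub, lb, ⊤⟩) (idPart c2) i).symm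
  have hM : ∀ m : Fin P.l, (j1 ≤ m.val ∧ m.val < j1 + n) → ∃ m' : Fin n, Fin.cast h m =
      (Fin.castAdd j2 (Fin.natAdd j1 m') : Fin (j1 + n + j2)) := by
    intro m hm
    refine ⟨⟨m.val - j1, by omega⟩, Fin.ext ?_⟩
    simp
    omega
  refine vcomp_eq_cut P (capP c1 c2 ub lb) h j1 n hn _ rfl (fun i => (thr i).2) ?_ ?_
    (fun i _ _ _ => (thr i).1) (fun i i' _ => Or.inr ⟨(thr i).1, (thr i').1⟩)
  · intro x y hxy
    have := capP_elim c1 c2 ub lb _ rfl x y hxy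
    have e : ∀ x : Fin (j1 + n + j2) ⊕ Fin (j1 + 0 + j2),
       (Sum.elim (Fin.cast h.symm) (fun i => Fin.cast hn.symm (gf j1 n (j1 + j2) i)) x).val =
       Sum.elim (fun i => i.val) (fun i => if i.val < j1 then i.val else i.val + n) x := by
      rintro (x | x)
      · rfl
      · rfl
    rw [← e x, ← e y] at this
    rcases this with h1 | ⟨h1, h2⟩
    · left
      have h1' := Fin.ext h1
      have h2 := P.rel.iseqv.refl
        (Sum.inr (Sum.elim (Fin.cast h.symm) (fun i => Fin.cast hn.symm (gf j1 n (j1 + j2) i)) x))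
      exact (congrArg (fun z => P.rel.r (Sum.inr (Sum.elim (Fin.cast h.symm) (fun i => Fin.cast hn.symm (gf j1 n (j1 + j2) i)) x)) (Sum.inr z)) h1').mp h2
    · right
      exact ⟨⟨Sum.inr _, h1, P.rel.iseqv.refl _⟩, ⟨Sum.inr _, h2, P.rel.iseqv.refl _⟩⟩
  · intro m m' hm hm'
    obtain ⟨a, ha⟩ := hM m hm
    obtain ⟨b, hb⟩ := hM m' hm'
    rw [ha, hb]
    exact tensor_left _ (idPart c2) (tensor_right (idPart c1) ⟨n, 0, ub, lb, ⊤⟩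
        (a := Sum.inl a) (b := Sum.inl b) trivial)

end CPartition
namespace CPartition

theorem cut_congr (P : CPartition) (j n l' l'' : ℕ) (e : l' = l'') (h : P.l = l' + n)
    (h' : P.l = l'' + n) : cut P j n l' h = cut P j n l'' h' := by
  subst e
  rfl

theorem rotUp_iter (C : PartitionCategory) (m n : ℕ) : ∀ (P : CPartition) (_ : P ∈ C.mem)
    (h : P.l = m + n) (F : Fin m → Fin P.l) (_ : ∀ i, (F i).val = i.val + n),
    ∃ (k' : ℕ) (uc' : Fin k' → Bool) (rel' : Setoid (Fin k' ⊕ Fin m)),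
      (⟨k', m, uc', fun i => P.lc (F i), rel'⟩ : CPartition) ∈ C.mem ∧
      (∀ i i', rel'.r (Sum.inr i) (Sum.inr i') ↔ P.rel.r (Sum.inr (F i)) (Sum.inr (F i'))) ∧
      (∀ i a, (¬ ∃ i', a = Sum.inr (F i')) → P.rel.r a (Sum.inr (F i)) →
        ∃ u, rel'.r (Sum.inr i) (Sum.inl u)) := by
  induction n with
  | zero =>
    rintro ⟨k, l, uc, lc, rel⟩ hP h F hF
    dsimp only at h F
    subst h
    have : F = id := by
      funext i
      exact Fin.ext (hF i)
    subst this
    refine ⟨k, uc, rel, hP, fun i i' => Iff.rfl, ?_⟩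
    rintro i (u | j) ha hai
    · exact ⟨u, rel.iseqv.symm hai⟩
    · exact (ha ⟨j, rfl⟩).elim
  | succ n ih =>
    rintro ⟨k, l, uc, lc, rel⟩ hP h F hF
    dsimp only at h F
    subst h
    let F' : Fin m → Fin (m + n) := fun i => ⟨i.val + n, by omega⟩
    have hFF : ∀ i, F i = (F' i).succ := by
      intro i
      apply Fin.ext
      rw [hF i]
      rfl
    have hF0 : ∀ i, F i ≠ 0 := by
      intro i hi
      rw [hFF] at hi
      exact Fin.succ_ne_zero _ hi
    obtain ⟨k', uc', rel', h1, h2, h3⟩ := ih (rotUp ⟨k, m + n + 1, uc, lc, rel⟩ (m + n) rfl)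
      (C.rotUp_mem _ hP _ rfl) rfl F' (fun i => rfl)
    refine ⟨k', uc', rel', ?_, ?_, ?_⟩
    · have e : (fun i => lc (F i)) = (fun i => lc (F' i).succ) := by
        funext i
        rw [hFF]
      show (⟨k', m, uc', fun i => lc (F i), rel'⟩ : CPartition) ∈ C.mem
      rw [e]
      exact h1
    · intro i i'
      rw [h2 i i', hFF, hFF]
      exact Iff.rfl
    · rintro i (u | j) ha hai
      · rw [hFF] at hai
        refine h3 i (Sum.inl u.succ) ?_ hai
        rintro ⟨i', hi'⟩
        exact Sum.inl_ne_inr hi'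
      · rw [hFF] at hai
        revert hai ha
        refine Fin.cases ?_ (fun j => ?_) j
        · intro ha hai
          refine h3 i (Sum.inl (0 : Fin (k + 1))) ?_ hai
          rintro ⟨i', hi'⟩
          exact Sum.inl_ne_inr hi'
        · intro ha hai
          refine h3 i (Sum.inr j) ?_ hai
          rintro ⟨i', hi'⟩
          apply ha
          refine ⟨i', ?_⟩
          rw [hFF, ← Sum.inr.inj hi']

theorem cut_mem_zero (C : PartitionCategory) {n : ℕ} (ub : Fin n → Bool) (lb : Fin 0 → Bool)
    (hb : (⟨n, 0, ub, lb, ⊤⟩ : CPartition) ∈ C.mem) (m : ℕ) (P : CPartition) (hP : P ∈ C.mem)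
    (h : P.l = m + n)
    (hcol : ∀ (i : Fin n) (x : Fin P.l), x.val = i.val → P.lc x = ub i) :
    cut P 0 n m h ∈ C.mem := by
  let F0 : Fin m → Fin P.l := fun i => Fin.cast h.symm (gf 0 n m i)
  have hF0 : ∀ i, (F0 i).val = i.val + n := fun i => rfl
  obtain ⟨k', uc', rel', h1, h2, h3⟩ := rotUp_iter C m n P hP h F0 hF0
  let A : CPartition := reflect ⟨k', m, uc', fun i => P.lc (F0 i), rel'⟩
  have hA : A ∈ C.mem := C.reflect_mem _ h1
  let S := vcomp A (reflect A) rfl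
  have hS : S ∈ C.mem := C.vcomp_mem _ _ _ hA (C.reflect_mem _ hA) (fun j => rfl)
  let b : CPartition := ⟨n, 0, ub, lb, ⊤⟩
  let Q := tensor b S
  have hQ : Q ∈ C.mem := C.tensor_mem _ _ hb hS
  have hk : P.l = Q.k := h.trans (Nat.add_comm m n)
  have hn : P.l = Q.l + n := h.trans (congrArg (· + n) (Nat.zero_add m).symm)
  have hFv : ∀ i : Fin Q.l, (Fin.cast hn.symm (gf 0 n Q.l i)).val = i.val + n := fun i => rfl
  have hFF : ∀ i : Fin m, (Fin.cast hn.symm (gf 0 n Q.l (Fin.natAdd 0 i : Fin (0 + m)))) = F0 i := by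
    intro i
    apply Fin.ext
    show 0 + i.val + n = i.val + n
    omega
  have hex : ∀ i : Fin Q.l, ∃ i' : Fin m, i = (Fin.natAdd 0 i' : Fin (0 + m)) := by
    intro i
    have := i.isLt
    have e : Q.l = 0 + m := rfl
    refine ⟨⟨i.val, by omega⟩, Fin.ext ?_⟩
    show i.val = 0 + i.val
    omega
  have hcF : ∀ i : Fin m, Fin.cast hk (F0 i) = (Fin.natAdd n i : Fin (n + m)) := by
    intro i
    apply Fin.ext
    show i.val + n = n + i.val
    omega
  have hcast : ∀ x : Fin P.l, x.val < n → ∃ i : Fin n, x.val = i.val ∧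
      Fin.cast hk x = (Fin.castAdd m i : Fin (n + m)) :=
    fun x hx => ⟨⟨x.val, hx⟩, rfl, Fin.ext rfl⟩
  have hSrel := dbl_rel A
  have hmem : vcomp P Q hk ∈ C.mem := by
    refine C.vcomp_mem _ _ _ hP hQ ?_
    intro x
    by_cases hx : x.val < n
    · obtain ⟨i, hi, hi'⟩ := hcast x hx
      rw [hi', hcol i x hi]
      exact (tensor_uc_left b S i).symm
    · have hx' : ∃ i : Fin m, x = F0 i := by
        have := x.isLt
        refine ⟨⟨x.val - n, by omega⟩, Fin.ext ?_⟩
        rw [hF0]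
        show x.val = x.val - n + n
        omega
      obtain ⟨i, rfl⟩ := hx'
      rw [hcF]
      exact (tensor_uc_right b S i).symm
  have hr : ∀ x, P.rel.r x x := fun x => P.rel.iseqv.refl x
  rw [vcomp_eq_cut P Q hk 0 n hn _ rfl] at hmem
  · rw [cut_congr P 0 n Q.l m (Nat.zero_add m) hn h] at hmem
    exact hmem
  · intro i
    obtain ⟨i, rfl⟩ := hex i
    rw [hFF]
    exact tensor_lc_right b S i
  · intro x y hxy
    rcases tensor_elim b S x y hxy with ⟨a, c, hac, rfl, rfl⟩ | ⟨a, c, hac, rfl, rfl⟩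
    · rcases a with a | a
      · rcases c with c | c
        · have ha : a.val < n := a.isLt
          have hc : c.val < n := c.isLt
          refine Or.inr ⟨⟨_, ?_, hr _⟩, ⟨_, ?_, hr _⟩⟩
          · show 0 ≤ a.val ∧ a.val < 0 + n
            omega
          · show 0 ≤ c.val ∧ c.val < 0 + n
            omega
        · exact Fin.elim0 c
      · exact Fin.elim0 a
    · left
      have h4 := ((h2 _ _).1 ((hSrel a c).1 hac).1)
      have e : ∀ a : Fin m ⊕ Fin m, (Sum.elim (Fin.cast hk.symm)
         (fun i => Fin.cast hn.symm (gf 0 n Q.l i))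
         (Sum.map (Fin.natAdd n) (Fin.natAdd 0) a : Fin (n + m) ⊕ Fin (0 + m))) =
         F0 (Sum.elim id id a) := by
        rintro (a | a)
        · apply Fin.ext
          show n + a.val = a.val + n
          omega
        · exact hFF a
      have e2 : ∀ u v : Fin P.l, u = F0 (Sum.elim id id a) → v = F0 (Sum.elim id id c) →
          P.rel.r (Sum.inr u) (Sum.inr v) := by
        rintro u v rfl rfl
        exact h4
      exact e2 _ _ (e a) (e c)
  · intro x x' hx hx'
    obtain ⟨i, -, hi⟩ := hcast x (by omega)
    obtain ⟨i', -, hi'⟩ := hcast x' (by omega)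
    rw [hi, hi']
    exact tensor_left b S (a := Sum.inl i) (b := Sum.inl i') trivial
  · intro i a ha hai
    obtain ⟨i, rfl⟩ := hex i
    rw [hFF] at hai ⊢
    rw [hcF]
    obtain ⟨u, hu⟩ := h3 i a (by
      rintro ⟨i', rfl⟩
      exact ha ⟨(Fin.natAdd 0 i' : Fin (0 + m)), by rw [hFF]⟩) hai
    refine tensor_right b S (a := Sum.inl i) (b := Sum.inr i) ?_
    exact (hSrel (Sum.inl i) (Sum.inr i)).2 ⟨rel'.iseqv.refl _, Or.inr ⟨u, hu⟩⟩
  · intro i i' hii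
    obtain ⟨i, rfl⟩ := hex i
    obtain ⟨i', rfl⟩ := hex i'
    rw [hFF, hFF] at hii
    left
    refine tensor_right b S (a := Sum.inr i) (b := Sum.inr i') ?_
    exact (hSrel (Sum.inr i) (Sum.inr i')).2 ⟨(h2 _ _).2 hii, Or.inl rfl⟩

theorem rot_cut (P : CPartition) (j n l'' : ℕ) (h : P.l = (l'' + 1) + n)
    (h1 : P.l = (l'' + n) + 1) :
    rotDown (cut (rotUp P (l'' + n) h1) j n l'' rfl) P.k rfl = cut P (j + 1) n (l'' + 1) h := by
  obtain ⟨k, l, uc, lc, rel⟩ := P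
  dsimp only at h h1
  subst h1
  have g0 : Fin.cast h.symm (gf (j + 1) n (l'' + 1) 0) = 0 := by
    apply Fin.ext
    simp [gf]
  have gs : ∀ i : Fin l'', Fin.cast h.symm (gf (j + 1) n (l'' + 1) i.succ) = (gf j n l'' i).succ := by
    intro i
    apply Fin.ext
    simp only [gf, Fin.val_cast, Fin.val_succ]
    split_ifs <;> omega
  refine mk_congr rfl ?_ ?_
  · funext i
    refine Fin.cases ?_ (fun i => ?_) i
    · show (!(!(lc 0))) = lc (Fin.cast h.symm (gf (j + 1) n (l'' + 1) 0))
      rw [g0, Bool.not_not]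
    · show lc (gf j n l'' i).succ = lc (Fin.cast h.symm (gf (j + 1) n (l'' + 1) i.succ))
      exact congrArg lc (gs i).symm
  · -- transport of the relation
    let e : Fin (k + 1) ⊕ Fin (l'' + n) → Fin k ⊕ Fin (l'' + n + 1) :=
      Sum.elim (fun i => Fin.cases (Sum.inr 0) (fun i' => Sum.inl i') i) (fun j => Sum.inr j.succ)
    have key : ∀ u v, (glue (Setoid.comap e rel) (gm j n)).r u v ↔
        (glue rel (gm (j + 1) n)).r (e u) (e v) := by
      have kk : ∀ u, (∃ m, gm j n m ∧ rel.r (e u) (e m)) ↔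
          ∃ m, gm (j + 1) n m ∧ rel.r (e u) m := by
        intro u
        constructor
        · rintro ⟨m | m, hm, hr⟩
          · exact hm.elim
          · refine ⟨_, ?_, hr⟩
            have hm' : j ≤ m.val ∧ m.val < j + n := hm
            show j + 1 ≤ m.val + 1 ∧ m.val + 1 < j + 1 + n
            omega
        · rintro ⟨m | m, hm, hr⟩
          · exact hm.elim
          · revert hm hr
            refine Fin.cases ?_ (fun m => ?_) m
            · intro hm
              have hm' : j + 1 ≤ 0 ∧ 0 < j + 1 + n := hm
              omega
            · intro hm hr
              refine ⟨Sum.inr m, ?_, hr⟩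
              have hm' : j + 1 ≤ m.val + 1 ∧ m.val + 1 < j + 1 + n := hm
              show j ≤ m.val ∧ m.val < j + n
              omega
      intro u v
      exact or_congr Iff.rfl (and_congr (kk u) (kk v))
    let d : Fin k ⊕ Fin (l'' + 1) → Fin (k + 1) ⊕ Fin (l'' + n) :=
      Sum.elim (fun i => Sum.inl i.succ)
        (fun i => Fin.cases (Sum.inl 0) (fun i' => Sum.inr (gf j n l'' i')) i)
    have hd : ∀ x : Fin k ⊕ Fin (l'' + 1), e (d x) =
        Sum.map id (fun i => Fin.cast h.symm (gf (j + 1) n (l'' + 1) i)) x := by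
      rintro (x | x)
      · rfl
      · refine Fin.cases ?_ (fun x => ?_) x
        · exact congrArg Sum.inr g0.symm
        · exact congrArg Sum.inr (gs x).symm
    let w : Fin k ⊕ Fin (l'' + 1) → Fin (k + 1) ⊕ Fin l'' :=
      Sum.elim (fun i => Sum.inl i.succ)
        (fun i => Fin.cases (Sum.inl 0) (fun i' => Sum.inr i') i)
    have hd2 : ∀ x : Fin k ⊕ Fin (l'' + 1), d x = Sum.map id (gf j n l'') (w x) := by
      rintro (x | x)
      · rfl
      · refine Fin.cases ?_ (fun x => ?_) x <;> rfl
    have fin : ∀ x y : Fin k ⊕ Fin (l'' + 1),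
        (glue (Setoid.comap e rel) (gm j n)).r (Sum.map id (gf j n l'') (w x))
          (Sum.map id (gf j n l'') (w y)) ↔
        (glue rel (gm (j + 1) n)).r
          (Sum.map id (fun i => Fin.cast h.symm (gf (j + 1) n (l'' + 1) i)) x)
          (Sum.map id (fun i => Fin.cast h.symm (gf (j + 1) n (l'' + 1) i)) y) := by
      intro x y
      rw [← hd, ← hd, ← hd2, ← hd2]
      exact key (d x) (d y)
    exact fin

theorem cut_mem (C : PartitionCategory) {n : ℕ} (ub : Fin n → Bool) (lb : Fin 0 → Bool)
    (hb : (⟨n, 0, ub, lb, ⊤⟩ : CPartition) ∈ C.mem) (j : ℕ) : ∀ (l' : ℕ) (P : CPartition)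
    (_ : P ∈ C.mem) (h : P.l = l' + n) (_ : j ≤ l')
    (_ : ∀ (i : Fin n) (x : Fin P.l), x.val = j + i.val → P.lc x = ub i),
    cut P j n l' h ∈ C.mem := by
  induction j with
  | zero =>
    intro l' P hP h _ hcol
    exact cut_mem_zero C ub lb hb l' P hP h (fun i x hx => hcol i x (by omega))
  | succ j ih =>
    intro l' P hP h hj hcol
    obtain ⟨l'', rfl⟩ : ∃ l'', l' = l'' + 1 := ⟨l' - 1, by omega⟩
    have h1 : P.l = (l'' + n) + 1 := by omega
    rw [← rot_cut P j n l'' h h1]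
    refine C.rotDown_mem _ (ih l'' _ (C.rotUp_mem P hP _ h1) rfl (by omega) ?_) _ _
    intro i x hx
    refine hcol i (Fin.cast h1.symm x.succ) ?_
    show x.val + 1 = _
    omega

end CPartition
namespace CPartition

theorem mk_inj {k l : ℕ} {uc uc' : Fin k → Bool} {lc lc' : Fin l → Bool}
    {r r' : Setoid (Fin k ⊕ Fin l)}
    (h : (⟨k, l, uc, lc, r⟩ : CPartition) = ⟨k, l, uc', lc', r'⟩) :
    uc = uc' ∧ lc = lc' ∧ r = r' := by
  cases h
  exact ⟨rfl, rfl, rfl⟩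

theorem thr_surj (p q : CPartition) (ht : q.t = p.t) (rr : Fin p.k → Fin q.k → Prop)
    (h1 : ∀ c, q.IsThrough c → ∃ a x, Quotient.mk q.rel (Sum.inl a) = c ∧
      p.IsThrough (Quotient.mk p.rel (Sum.inl x)) ∧ rr x a)
    (h2 : ∀ x x' a a', rr x a → rr x' a' → p.rel.r (Sum.inl x) (Sum.inl x') →
      q.rel.r (Sum.inl a) (Sum.inl a')) :
    ∃ (a : {c : Quotient q.rel // q.IsThrough c} → Fin q.k)
      (x : {c : Quotient q.rel // q.IsThrough c} → Fin p.k),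
      (∀ c, Quotient.mk q.rel (Sum.inl (a c)) = c.1) ∧ (∀ c, rr (x c) (a c)) ∧
      ∀ y, p.IsThrough (Quotient.mk p.rel (Sum.inl y)) →
        ∃ c, p.rel.r (Sum.inl (x c)) (Sum.inl y) := by
  choose a x ha hx hr using fun c : {c : Quotient q.rel // q.IsThrough c} => h1 c.1 c.2
  refine ⟨a, x, ha, hr, ?_⟩
  let g : {c : Quotient q.rel // q.IsThrough c} → {c : Quotient p.rel // p.IsThrough c} :=
    fun c => ⟨_, hx c⟩
  have hg : Function.Injective g := by
    intro c c' hcc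
    have h3 : p.rel.r (Sum.inl (x c)) (Sum.inl (x c')) := Quotient.exact (congrArg Subtype.val hcc)
    have h4 := h2 _ _ _ _ (hr c) (hr c') h3
    apply Subtype.ext
    rw [← ha c, ← ha c']
    exact Quotient.sound h4
  have hfin : Finite {c : Quotient p.rel // p.IsThrough c} := inferInstance
  have hb := hg.bijective_of_nat_card_le (le_of_eq ht.symm)
  intro y hy
  obtain ⟨c, hc⟩ := hb.2 ⟨_, hy⟩
  exact ⟨c, Quotient.exact (congrArg Subtype.val hc)⟩

theorem final (L j n : ℕ) (hj : j ≤ L) (uc : Fin (L + n) → Bool)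
    (rel : Setoid (Fin (L + n) ⊕ Fin (L + n)))
    (hsw : ∀ x y, rel.r (Sum.swap x) (Sum.swap y) ↔ rel.r x y)
    (hT : ∀ x y, rel.r (Sum.inl x) (Sum.inr y) → rel.r (Sum.inl x) (Sum.inr x))
    (p : CPartition) (hp : p = ⟨L + n, L + n, uc, uc, rel⟩)
    (r : CPartition) (hr : r = cut ⟨L + n, L + n, uc, uc, rel⟩ j n L rfl)
    (q : CPartition) (h : (reflect r).l = L + n) (hq : q = cut (reflect r) j n L h)
    (ht : q.t = p.t) :
    vcomp r (reflect r) rfl = p ∧ vcomp (reflect r) r rfl = q := by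
  have rr : ∀ a, rel.r a a := fun a => rel.iseqv.refl a
  have rs : ∀ {a b}, rel.r a b → rel.r b a := fun h => rel.iseqv.symm h
  have rt : ∀ {a b c}, rel.r a b → rel.r b c → rel.r a c := fun h h' => rel.iseqv.trans h h'
  obtain ⟨e, he⟩ : ∃ e : Fin (L + n) → Fin (L + n) → Prop,
    e = fun x y => rel.r (Sum.inl x) (Sum.inl y) := ⟨_, rfl⟩
  obtain ⟨T, hTd⟩ : ∃ T : Fin (L + n) → Prop,
    T = fun x => rel.r (Sum.inl x) (Sum.inr x) := ⟨_, rfl⟩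
  obtain ⟨M, hM⟩ : ∃ M : Fin (L + n) → Prop,
    M = fun x => j ≤ x.val ∧ x.val < j + n := ⟨_, rfl⟩
  obtain ⟨EM, hEM⟩ : ∃ EM : Fin (L + n) → Prop,
    EM = fun x => ∃ m, M m ∧ e x m := ⟨_, rfl⟩
  obtain ⟨f, hf⟩ : ∃ f, f = gf j n L := ⟨_, rfl⟩
  have er : ∀ x, e x x := by
    subst he; exact fun x => rr _
  have es : ∀ {x y}, e x y → e y x := by
    subst he; exact fun h => rs h
  have et : ∀ {x y z}, e x y → e y z → e x z := by
    subst he; exact fun h h' => rt h h'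
  have pll : ∀ x y, rel.r (Sum.inl x) (Sum.inl y) ↔ e x y := by
    subst he; exact fun x y => Iff.rfl
  have prr : ∀ x y, rel.r (Sum.inr x) (Sum.inr y) ↔ e x y := by
    subst he; exact fun x y => hsw (Sum.inl x) (Sum.inl y)
  have plr : ∀ x y, rel.r (Sum.inl x) (Sum.inr y) ↔ e x y ∧ T x := by
    intro x y
    constructor
    · intro h
      have h' := hT x y h
      subst hTd
      exact ⟨(prr x y).1 (rt (rs h') h), h'⟩
    · rintro ⟨h1, h2⟩
      subst hTd
      exact rt h2 ((prr x y).2 h1)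
  have Te : ∀ {x y}, e x y → T x → T y := by
    intro x y h1 h2
    have h3 := (plr x x).2 ⟨er x, h2⟩
    have h4 := (plr x y).2 ⟨h1, h2⟩
    have h5 := rt (rs ((pll x y).2 h1)) h4
    exact ((plr y y).1 h5).2
  have EMe : ∀ {x y}, e x y → EM x → EM y := by
    subst hEM
    rintro x y h ⟨m, hm, h'⟩
    exact ⟨m, hm, et (es h) h'⟩
  have MEM : ∀ {m}, M m → EM m := by
    subst hEM
    exact fun {m} h => ⟨m, h, er m⟩
  -- classes meeting the cut part
  have gl : ∀ x, (∃ m, gm j n m ∧ rel.r (Sum.inl x) m) ↔ EM x ∧ T x := by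
    intro x
    subst hEM
    constructor
    · rintro ⟨m | m, hm, h⟩
      · exact hm.elim
      · have := (plr x m).1 h
        refine ⟨⟨m, ?_, this.1⟩, this.2⟩
        subst hM
        exact hm
    · rintro ⟨⟨m, hm, h⟩, h'⟩
      refine ⟨Sum.inr m, ?_, (plr x m).2 ⟨h, h'⟩⟩
      subst hM
      exact hm
  have gr : ∀ x, (∃ m, gm j n m ∧ rel.r (Sum.inr x) m) ↔ EM x := by
    intro x
    subst hEM
    constructor
    · rintro ⟨m | m, hm, h⟩
      · exact hm.elim
      · refine ⟨m, ?_, (prr x m).1 h⟩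
        subst hM
        exact hm
    · rintro ⟨m, hm, h⟩
      refine ⟨Sum.inr m, ?_, (prr x m).2 h⟩
      subst hM
      exact hm
  subst hr
  let r := cut ⟨L + n, L + n, uc, uc, rel⟩ j n L rfl
  have r_ll : ∀ x y : Fin (L + n), r.rel.r (Sum.inl x) (Sum.inl y) ↔
      e x y ∨ ((EM x ∧ T x) ∧ (EM y ∧ T y)) :=
    fun x y => or_congr (pll x y) (and_congr (gl x) (gl y))
  have r_rr : ∀ a b : Fin L, r.rel.r (Sum.inr a) (Sum.inr b) ↔
      e (f a) (f b) ∨ (EM (f a) ∧ EM (f b)) := by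
    subst hf
    exact fun x y => or_congr (prr _ _) (and_congr (gr _) (gr _))
  have r_lr : ∀ (x : Fin (L + n)) (b : Fin L), r.rel.r (Sum.inl x) (Sum.inr b) ↔
      (e x (f b) ∧ T x) ∨ ((EM x ∧ T x) ∧ EM (f b)) := by
    subst hf
    exact fun x y => or_congr (plr _ _) (and_congr (gl _) (gr _))
  have r_rl : ∀ (x : Fin (L + n)) (b : Fin L), r.rel.r (Sum.inr b) (Sum.inl x) ↔
      (e x (f b) ∧ T x) ∨ ((EM x ∧ T x) ∧ EM (f b)) :=
    fun x b => ⟨fun h => (r_lr x b).1 (r.rel.iseqv.symm h),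
      fun h => r.rel.iseqv.symm ((r_lr x b).2 h)⟩
  let TM : Prop := ∃ m, M m ∧ T m
  have EMT : ∀ x, EM x → T x → TM := by
    subst hEM
    rintro x ⟨m, hm, h⟩ h'
    exact ⟨m, hm, Te h h'⟩
  have ql : ∀ a : Fin L, (∃ m : Fin L ⊕ Fin (L + n), gm j n m ∧
      (reflect r).rel.r (Sum.inl a) m) ↔ EM (f a) ∧ TM := by
    intro a
    constructor
    · rintro ⟨m | m, hm, h⟩
      · exact hm.elim
      · have hm' : M m := by
          subst hM
          exact hm
        rcases (r_rl m a).1 h with ⟨h1, h2⟩ | ⟨⟨h1, h2⟩, h3⟩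
        · exact ⟨EMe h1 (MEM hm'), m, hm', h2⟩
        · exact ⟨h3, m, hm', h2⟩
    · rintro ⟨h, m, hm, hm'⟩
      refine ⟨Sum.inr m, ?_, (r_rl m a).2 (Or.inr ⟨⟨MEM hm, hm'⟩, h⟩)⟩
      subst hM
      exact hm
  have qr : ∀ x : Fin (L + n), (∃ m : Fin L ⊕ Fin (L + n), gm j n m ∧
      (reflect r).rel.r (Sum.inr x) m) ↔ EM x := by
    intro x
    constructor
    · rintro ⟨m | m, hm, h⟩
      · exact hm.elim
      · have hm' : M m := by
          subst hM
          exact hm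
        rcases (r_ll x m).1 h with h1 | ⟨⟨h1, h2⟩, h3⟩
        · exact EMe (es h1) (MEM hm')
        · exact h1
    · intro h
      rw [hEM] at h
      obtain ⟨m, hm, hm'⟩ := h
      refine ⟨Sum.inr m, ?_, (r_ll x m).2 (Or.inl hm')⟩
      subst hM
      exact hm
  have Q_ll : ∀ a b : Fin L, (cut (reflect r) j n L h).rel.r (Sum.inl a) (Sum.inl b) ↔
      e (f a) (f b) ∨ (EM (f a) ∧ EM (f b)) := by
    intro a b
    refine (or_congr (r_rr a b) (and_congr (ql a) (ql b))).trans ?_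
    tauto
  have Q_rr : ∀ a b : Fin L, (cut (reflect r) j n L h).rel.r (Sum.inr a) (Sum.inr b) ↔
      e (f a) (f b) ∨ (EM (f a) ∧ EM (f b)) := by
    subst hf
    intro a b
    refine (or_congr (r_ll _ _) (and_congr (qr _) (qr _))).trans ?_
    show (e (gf j n L a) (gf j n L b) ∨ _) ∨ _ ↔ _
    tauto
  have Q_lr : ∀ a b : Fin L, (cut (reflect r) j n L h).rel.r (Sum.inl a) (Sum.inr b) ↔
      (e (f a) (f b) ∨ (EM (f a) ∧ EM (f b))) ∧ (T (f a) ∨ (EM (f a) ∧ TM)) := by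
    intro a b
    have : (cut (reflect r) j n L h).rel.r (Sum.inl a) (Sum.inr b) ↔
      ((e (f b) (f a) ∧ T (f b)) ∨ ((EM (f b) ∧ T (f b)) ∧ EM (f a))) ∨
        ((EM (f a) ∧ TM) ∧ EM (f b)) := by
      subst hf
      exact or_congr (r_rl _ _) (and_congr (ql _) (qr _))
    rw [this]
    constructor
    · rintro ((⟨h1, h2⟩ | ⟨⟨h1, h2⟩, h3⟩) | ⟨⟨h1, h2⟩, h3⟩)
      · exact ⟨Or.inl (es h1), Or.inl (Te h1 h2)⟩
      · exact ⟨Or.inr ⟨h3, h1⟩, Or.inr ⟨h3, EMT _ h1 h2⟩⟩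
      · exact ⟨Or.inr ⟨h1, h3⟩, Or.inr ⟨h1, h2⟩⟩
    · rintro ⟨h1 | ⟨h1, h2⟩, h3 | ⟨h3, h4⟩⟩
      · exact Or.inl (Or.inl ⟨es h1, Te h1 h3⟩)
      · exact Or.inr ⟨⟨h3, h4⟩, EMe h1 h3⟩
      · exact Or.inr ⟨⟨h1, EMT _ h1 h3⟩, h2⟩
      · exact Or.inr ⟨⟨h3, h4⟩, h2⟩
  have thr : ∀ a : Fin L, (∃ x : Fin (L + n), r.rel.r (Sum.inr a) (Sum.inl x)) ↔
      (T (f a) ∨ (EM (f a) ∧ TM)) := by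
    intro a
    constructor
    · rintro ⟨x, hx⟩
      rcases (r_rl x a).1 hx with ⟨h1, h2⟩ | ⟨⟨h1, h2⟩, h3⟩
      · exact Or.inl (Te h1 h2)
      · exact Or.inr ⟨h3, EMT _ h1 h2⟩
    · rintro (h1 | ⟨h1, m, h2, h3⟩)
      · exact ⟨f a, (r_rl _ a).2 (Or.inl ⟨er _, h1⟩)⟩
      · exact ⟨m, (r_rl _ a).2 (Or.inr ⟨⟨MEM h2, h3⟩, h1⟩)⟩
  have hj' : ∀ x, ¬ M x → ∃ a, f a = x := by
    subst hM hf
    exact fun x hx => gf_surj j n L hj x hx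
  -- the hypothesis on the number of through blocks
  have pthr : ∀ x : Fin (L + n), p.IsThrough (Quotient.mk p.rel (Sum.inl (Fin.cast (by rw [hp]) x))) ↔ T x := by
    intro x
    subst hp
    constructor
    · rintro ⟨-, y, hy⟩
      have h3 : rel.r (Sum.inr y) (Sum.inl x) := Quotient.exact hy
      exact ((plr x y).1 (rs h3)).2
    · intro hx
      refine ⟨⟨x, rfl⟩, x, ?_⟩
      exact Quotient.sound (rs ((plr x x).2 ⟨er x, hx⟩))
  subst hp
  have hH : (∀ m m', M m → M m' → T m → T m' → e m m') ∧
      (∀ m, M m → T m → ∃ a, EM (f a)) := by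
    obtain ⟨a, x, ha, hx, hs⟩ := thr_surj _ q ht
      (fun x a => (e x (f (Fin.cast (by rw [hq]; rfl) a)) ∧ T x) ∨
        ((EM x ∧ T x) ∧ EM (f (Fin.cast (by rw [hq]; rfl) a)))) (by
      subst hq
      rintro c ⟨⟨a, ha⟩, b, hb⟩
      have h3 : (cut (reflect r) j n L h).rel.r (Sum.inl a) (Sum.inr b) :=
        Quotient.exact (ha.trans hb.symm)
      obtain ⟨x, hx⟩ := (thr a).2 ((Q_lr a b).1 h3).2
      have hx' := (r_rl x a).1 hx
      refine ⟨a, x, ha, (pthr x).2 ?_, hx'⟩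
      rcases hx' with h | h
      · exact h.2
      · exact h.1.2) (by
      subst hq
      intro x x' a a' h1 h2 h3
      have h3' : e x x' := (pll _ _).1 h3
      refine (Q_ll a a').2 ?_
      change (e x (f a) ∧ T x) ∨ ((EM x ∧ T x) ∧ EM (f a)) at h1
      change (e x' (f a') ∧ T x') ∨ ((EM x' ∧ T x') ∧ EM (f a')) at h2
      rcases h1 with h1 | h1 <;> rcases h2 with h2 | h2
      · exact Or.inl (et (es h1.1) (et h3' h2.1))
      · exact Or.inr ⟨EMe h1.1 (EMe (es h3') h2.1.1), h2.2⟩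
      · exact Or.inr ⟨h1.2, EMe h2.1 (EMe h3' h1.1.1)⟩
      · exact Or.inr ⟨h1.2, h2.2⟩)
    subst hq
    have key : ∀ m, M m → T m → ∃ c, e (x c) m ∧ EM (f (a c)) := by
      intro m hm hmT
      obtain ⟨c, hc⟩ := hs m ((pthr m).2 hmT)
      have hc' : e (x c) m := (pll _ _).1 hc
      refine ⟨c, hc', ?_⟩
      rcases hx c with h1 | h1
      · exact EMe h1.1 (EMe (es hc') (MEM hm))
      · exact h1.2
    constructor
    · intro m m' hm hm' hmT hmT'
      obtain ⟨c, hc, hc2⟩ := key m hm hmT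
      obtain ⟨c', hc', hc2'⟩ := key m' hm' hmT'
      have : c = c' := by
        apply Subtype.ext
        rw [← ha c, ← ha c']
        exact Quotient.sound ((Q_ll _ _).2 (Or.inr ⟨hc2, hc2'⟩))
      subst this
      exact et (es hc) hc'
    · intro m hm hmT
      obtain ⟨c, hc, hc2⟩ := key m hm hmT
      exact ⟨_, hc2⟩
  subst hq
  obtain ⟨H1, H2⟩ := hH
  have H1' : ∀ x y, EM x → T x → EM y → T y → e x y := by
    intro x y h1 h2 h3 h4
    rw [hEM] at h1 h3
    obtain ⟨m, hm, hm1⟩ := h1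
    obtain ⟨m', hm', hm1'⟩ := h3
    exact et hm1 (et (H1 m m' hm hm' (Te hm1 h2) (Te hm1' h4)) (es hm1'))
  have R_ll : ∀ x y : Fin (L + n), r.rel.r (Sum.inl x) (Sum.inl y) ↔ e x y := by
    intro x y
    rw [r_ll]
    constructor
    · rintro (h1 | h1)
      · exact h1
      · exact H1' x y h1.1.1 h1.1.2 h1.2.1 h1.2.2
    · exact Or.inl
  have R_t : ∀ x : Fin (L + n), (∃ a : Fin L, r.rel.r (Sum.inl x) (Sum.inr a)) ↔ T x := by
    intro x
    constructor
    · rintro ⟨a, ha⟩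
      rcases (r_lr x a).1 ha with h1 | h1
      · exact h1.2
      · exact h1.1.2
    · intro hx
      by_cases hxM : M x
      · obtain ⟨a, ha⟩ := H2 x hxM hx
        exact ⟨a, (r_lr x a).2 (Or.inr ⟨⟨MEM hxM, hx⟩, ha⟩)⟩
      · obtain ⟨a, rfl⟩ := hj' x hxM
        exact ⟨a, (r_lr _ a).2 (Or.inl ⟨er _, hx⟩)⟩
  constructor
  · refine mk_congr rfl rfl ?_
    intro x y
    refine (dbl_rel r x y).trans ?_
    refine (and_congr (R_ll _ _) (or_congr Iff.rfl (R_t _))).trans ?_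
    rcases x with x | x <;> rcases y with y | y
    · exact ⟨fun h => (pll x y).2 h.1, fun h => ⟨(pll x y).1 h, Or.inl rfl⟩⟩
    · refine Iff.trans ?_ (plr x y).symm
      exact and_congr Iff.rfl (or_iff_right (show ¬ (true = false) by decide))
    · refine Iff.trans ?_ ((plr y x).symm.trans ⟨fun h => rs h, fun h => rs h⟩)
      refine (and_congr Iff.rfl (or_iff_right (show ¬ (false = true) by decide))).trans ?_
      show e x y ∧ T x ↔ e y x ∧ T y
      exact ⟨fun h => ⟨es h.1, Te h.1 h.2⟩, fun h => ⟨es h.1, Te h.1 h.2⟩⟩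
    · exact ⟨fun h => (prr x y).2 h.1, fun h => ⟨(prr x y).1 h, Or.inl rfl⟩⟩
  · have hd := dbl_rel (reflect r)
    have e3 : vcomp (reflect r) (reflect (reflect r)) rfl = vcomp (reflect r) r rfl := by
      congr 1
      exact reflect_reflect r
    show vcomp (reflect r) r rfl = _
    rw [← e3]
    refine mk_congr rfl rfl ?_
    intro x y
    refine (hd x y).trans ?_
    refine (and_congr (r_rr _ _) (or_congr Iff.rfl (thr _))).trans ?_
    rcases x with x | x <;> rcases y with y | y
    · exact ⟨fun h => (Q_ll x y).2 h.1, fun h => ⟨(Q_ll x y).1 h, Or.inl rfl⟩⟩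
    · refine Iff.trans ?_ (Q_lr x y).symm
      exact and_congr Iff.rfl (or_iff_right (show ¬ (true = false) by decide))
    · have qs : ∀ {u v}, (cut (reflect r) j n L h).rel.r u v →
          (cut (reflect r) j n L h).rel.r v u :=
        fun h' => (cut (reflect r) j n L h).rel.iseqv.symm h'
      refine Iff.trans ?_ ((Q_lr y x).symm.trans ⟨fun h => qs h, fun h => qs h⟩)
      refine (and_congr Iff.rfl (or_iff_right (show ¬ (false = true) by decide))).trans ?_
      show (e (f x) (f y) ∨ (EM (f x) ∧ EM (f y))) ∧ (T (f x) ∨ (EM (f x) ∧ TM)) ↔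
        (e (f y) (f x) ∨ (EM (f y) ∧ EM (f x))) ∧ (T (f y) ∨ (EM (f y) ∧ TM))
      have sym : ∀ x y, (e (f x) (f y) ∨ (EM (f x) ∧ EM (f y))) ∧ (T (f x) ∨ (EM (f x) ∧ TM)) →
        (e (f y) (f x) ∨ (EM (f y) ∧ EM (f x))) ∧ (T (f y) ∨ (EM (f y) ∧ TM)) := by
        rintro x y ⟨h1 | ⟨h1, h2⟩, h3 | ⟨h3, h4⟩⟩
        · exact ⟨Or.inl (es h1), Or.inl (Te h1 h3)⟩
        · exact ⟨Or.inl (es h1), Or.inr ⟨EMe h1 h3, h4⟩⟩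
        · exact ⟨Or.inr ⟨h2, h1⟩, Or.inr ⟨h2, EMT _ h1 h3⟩⟩
        · exact ⟨Or.inr ⟨h2, h1⟩, Or.inr ⟨h2, h4⟩⟩
      exact ⟨sym x y, sym y x⟩
    · exact ⟨fun h => (Q_rr x y).2 h.1, fun h => ⟨(Q_rr x y).1 h, Or.inl rfl⟩⟩

end CPartition
/-- in a category of partitions `C`, if a projective partition `q`
is obtained from a projective partition `p ∈ C` by symmetric capping with a
one-block one-row partition `b ∈ C` (i.e. `q = cap ∘ p ∘ cap*` where
`cap = |^{⊗j₁} ⊗ b ⊗ |^{⊗j₂}`), and `t(q) = t(p)`, then `q` is equivalent to `p`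
in `C` : there is `r ∈ C` with `r*r = p` and `rr* = q`. -/
theorem symmetric_capping_equiv (C : PartitionCategory)
    (p : CPartition) (hp : p ∈ C.mem) (hproj : p.IsProjective)
    (j1 j2 : ℕ) (c1 : Fin j1 → Bool) (c2 : Fin j2 → Bool)
    (b : CPartition) (hb : b ∈ C.mem) (hbrow : b.l = 0) (hbblock : b.rel = ⊤)
    (cap : CPartition) (hcap : cap = tensor (tensor (idPart c1) b) (idPart c2))
    (h1 : p.l = cap.k) (hcol : ∀ j, p.lc j = cap.uc (Fin.cast h1 j))
    (h2 : (reflect cap).l = p.k)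
    (q : CPartition) (hq : q = vcomp (vcomp (reflect cap) p h2) cap h1)
    (ht : q.t = p.t) :
    EquivIn C.mem p q := by
  obtain ⟨n, bl, ub, lb, brel⟩ := b
  dsimp only at hbrow hbblock
  subst hbrow
  have hbb : brel = (⊤ : Setoid (Fin n ⊕ Fin 0)) := hbblock
  clear hbblock
  subst hbb
  have hcap' : cap = capP c1 c2 ub lb := hcap
  clear hcap
  subst hcap'
  obtain ⟨k, l, uc, lc, rel⟩ := p
  have hn : l = (j1 + j2) + n := by
    have e : l = j1 + n + j2 := h1
    omega
  subst hn
  obtain ⟨hk, hpp, hrefl⟩ := hproj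
  have hk' : j1 + j2 + n = k := hk
  subst hk'
  obtain ⟨hlc, -, hrel⟩ := mk_inj hrefl
  have hlc' : lc = uc := hlc
  clear hlc
  subst hlc'
  obtain ⟨-, -, hrel2⟩ := mk_inj hpp
  let P : CPartition := ⟨j1 + j2 + n, j1 + j2 + n, lc, lc, rel⟩
  have hsw : ∀ x y, rel.r (Sum.swap x) (Sum.swap y) ↔ rel.r x y := by
    intro x y
    have e : (Setoid.comap Sum.swap rel).r x y ↔ rel.r x y := by rw [hrel]
    exact e
  have hpp' : ∀ x y, (mid P P rfl).r (Sum.map id Sum.inr x) (Sum.map id Sum.inr y) ↔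
      rel.r x y := by
    intro x y
    have e : (vcomp P P rfl).rel.r x y ↔ rel.r x y := iff_of_eq (congrArg (fun S => S.r x y) hrel2)
    exact e
  have hT : ∀ x y, rel.r (Sum.inl x) (Sum.inr y) → rel.r (Sum.inl x) (Sum.inr x) := by
    intro x y hxy
    refine (hpp' (Sum.inl x) (Sum.inr x)).1 ?_
    have e1 := mid_left P P rfl (a := Sum.inl x) (b := Sum.inr y) hxy
    have e2 := mid_right P P rfl (a := Sum.inl y) (b := Sum.inr x)
      (rel.iseqv.symm ((hsw (Sum.inl x) (Sum.inr y)).2 hxy))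
    exact (mid P P rfl).iseqv.trans e1 e2
  have er : vcomp P (capP c1 c2 ub lb) h1 = cut P j1 n (j1 + j2) rfl :=
    vcomp_cap P c1 c2 ub lb h1 hcol rfl
  have hr' : vcomp (reflect (capP c1 c2 ub lb)) P h2 = reflect (cut P j1 n (j1 + j2) rfl) := by
    rw [← er, ← vcomp_reflect (capP c1 c2 ub lb) P h2 h1]
    congr 1
    exact hrefl.symm
  have gen : ∀ (A B : CPartition) (hA : A.l = (capP c1 c2 ub lb).k)
      (hB : B.l = (capP c1 c2 ub lb).k), A = B →
      vcomp A (capP c1 c2 ub lb) hA = vcomp B (capP c1 c2 ub lb) hB := by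
    rintro A B hA hB rfl
    rfl
  have hq' : q = cut (reflect (cut P j1 n (j1 + j2) rfl)) j1 n (j1 + j2) rfl := by
    refine hq.trans ((gen (vcomp (reflect (capP c1 c2 ub lb)) P h2) (reflect (cut P j1 n (j1 + j2) rfl)) h1 h1 hr').trans ?_)
    exact vcomp_cap (reflect (cut P j1 n (j1 + j2) rfl)) c1 c2 ub lb h1 hcol rfl
  refine ⟨cut P j1 n (j1 + j2) rfl, ?_, ?_⟩
  · refine cut_mem C ub lb hb j1 _ P hp rfl (by omega) ?_
    intro i x hx
    have e1 : P.lc x = (capP c1 c2 ub lb).uc (Fin.cast h1 x) := hcol x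
    have e2 : Fin.cast h1 x = (Fin.castAdd j2 (Fin.natAdd j1 i) : Fin (j1 + n + j2)) :=
      Fin.ext hx
    rw [e1, e2]
    exact (tensor_uc_left (tensor (idPart c1) ⟨n, 0, ub, lb, ⊤⟩) (idPart c2) (Fin.natAdd j1 i)).trans
      (tensor_uc_right (idPart c1) ⟨n, 0, ub, lb, ⊤⟩ i)
  · exact final (j1 + j2) j1 n (by omega) lc rel hsw hT P rfl _ rfl q rfl hq' ht
end

section
/- Let C be a category of noncrossing colored partitions with I(C) = ℤ \ {0} (i.e., π_k ∈ C for all k ≠ 0), and suppose π_{0⁺} ∈ C, where π_{0⁺} is the one-block projective partition on points colored white-black in each row. Then the set S(C) of equivalence classes of one-block projective partitions in C, with fusion [k]∗[k'] = [k+k'] and involution [k] ↦ [−k], is an additive group isomorphic to ℤ_s for some s ∈ {1,2,…} ∪ {∞}, i.e., S(C) is a quotient group of ℤ. -/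
open scoped Classical

open CPartition

/-- `π_k` extended to `k = 0` by the partition `π_{0⁺}`. -/
noncomputable def piZ' (k : ℤ) : CPartition := if k = 0 then pi0plus else piZ k

namespace CPartition

/-- The one-block partition with upper word `u` and lower word `l`. -/
def blk (u l : List Bool) : CPartition := ⟨u.length, l.length, u.get, l.get, ⊤⟩

/-- Reverse and flip a word. -/
def winv (u : List Bool) : List Bool := (u.map not).reverse

theorem eq_blk (p : CPartition) (h : p.rel = ⊤) :
    p = blk (List.ofFn p.uc) (List.ofFn p.lc) := by
  obtain ⟨k, l, uc, lc, rel⟩ := p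
  change rel = ⊤ at h
  subst h
  have key : ∀ (k' l' : ℕ) (hk : k = k') (hl : l = l') (uc' : Fin k' → Bool)
      (lc' : Fin l' → Bool), (∀ i, uc i = uc' (Fin.cast hk i)) →
      (∀ i, lc i = lc' (Fin.cast hl i)) →
      (⟨k, l, uc, lc, ⊤⟩ : CPartition) = ⟨k', l', uc', lc', ⊤⟩ := by
    intro k' l' hk hl uc' lc' h1 h2
    subst hk hl
    have e1 : uc = uc' := funext h1
    have e2 : lc = lc' := funext h2
    rw [e1, e2]
  apply key _ _ (by simp) (by simp)
  · intro i; simp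
  · intro i; simp

theorem eq_blk' (p : CPartition) (h : p.rel = ⊤) (u l : List Bool)
    (hu : List.ofFn p.uc = u) (hl : List.ofFn p.lc = l) : p = blk u l := by
  rw [← hu, ← hl]; exact eq_blk p h

theorem rel_top_of_eq {p q : CPartition} (h : p = q) (hq : q.rel = ⊤) : p.rel = ⊤ := by
  subst h; exact hq

theorem comap_top' {X Y : Type*} (f : X → Y) : Setoid.comap f (⊤ : Setoid Y) = ⊤ := by
  ext; simp [Setoid.comap_rel]

theorem rotDown_blk (c : Bool) (u l : List Bool) :
    rotDown (blk (c :: u) l) u.length rfl = blk u ((!c) :: l) := by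
  apply eq_blk'
  · exact comap_top' _
  · exact List.ofFn_get u
  · simp [rotDown, blk, List.ofFn_succ]; rfl

theorem rotUp_blk (c : Bool) (u l : List Bool) :
    rotUp (blk u (c :: l)) l.length rfl = blk ((!c) :: u) l := by
  apply eq_blk'
  · exact comap_top' _
  · simp [rotUp, blk, List.ofFn_succ]; rfl
  · exact List.ofFn_get l

theorem vcomp_rel_top (p q : CPartition) (h : p.l = q.k) (hq : q.rel = ⊤)
    (hp : ∀ i, ∃ j, p.rel.r (Sum.inl i) (Sum.inr j)) : (vcomp p q h).rel = ⊤ := by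
  rw [Setoid.eq_top_iff]
  have hq' : ∀ a b, q.rel.r a b := fun a b => by
    have := Setoid.eq_top_iff.1 hq a b
    exact this
  set R := (fun x y : Fin p.k ⊕ (Fin p.l ⊕ Fin q.l) =>
      (∃ a b, p.rel.r a b ∧ Sum.map id Sum.inl a = x ∧ Sum.map id Sum.inl b = y) ∨
      (∃ a b, q.rel.r a b ∧
        Sum.inr (Sum.map (Fin.cast h.symm) id a) = x ∧
        Sum.inr (Sum.map (Fin.cast h.symm) id b) = y)) with hR
  have h1 : ∀ a b : Fin p.l ⊕ Fin q.l, Relation.EqvGen R (Sum.inr a) (Sum.inr b) := by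
    intro a b
    apply Relation.EqvGen.rel
    right
    refine ⟨Sum.map (Fin.cast h) id a, Sum.map (Fin.cast h) id b, hq' _ _, ?_, ?_⟩
    · cases a <;> simp
    · cases b <;> simp
  have h2 : ∀ x : Fin p.k ⊕ (Fin p.l ⊕ Fin q.l), ∃ a, Relation.EqvGen R x (Sum.inr a) := by
    intro x
    cases x with
    | inr a => exact ⟨a, Relation.EqvGen.refl _⟩
    | inl i =>
      obtain ⟨j, hj⟩ := hp i
      exact ⟨Sum.inl j, Relation.EqvGen.rel _ _ (Or.inl ⟨_, _, hj, rfl, rfl⟩)⟩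
  intro x y
  obtain ⟨a, ha⟩ := h2 (Sum.map id Sum.inr x)
  obtain ⟨b, hb⟩ := h2 (Sum.map id Sum.inr y)
  exact (ha.trans _ _ _ (h1 a b)).trans _ _ _ (hb.symm _ _)

theorem elim_get (a c : List Bool) (j : Fin (a.length + c.length)) :
    Sum.elim a.get c.get (finSumFinEquiv.symm j) = (a ++ c).get (Fin.cast (by simp) j) := by
  obtain ⟨x, rfl⟩ := finSumFinEquiv.surjective j
  cases x with
  | inl i => simp
  | inr i => simp

end CPartition

namespace PartitionCategory

variable (C : PartitionCategory)

/-- The lower words whose one-block partition lies in `C`. -/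
def S (v : List Bool) : Prop := blk [] v ∈ C.mem

theorem mem_rot (c : Bool) (u l : List Bool) :
    blk (c :: u) l ∈ C.mem ↔ blk u ((!c) :: l) ∈ C.mem := by
  constructor
  · intro h
    rw [← rotDown_blk]
    exact C.rotDown_mem _ h _ _
  · intro h
    have := C.rotUp_mem _ h l.length rfl
    rw [rotUp_blk] at this
    simpa using this

theorem mem_iff_S (u l : List Bool) : blk u l ∈ C.mem ↔ C.S (winv u ++ l) := by
  induction u generalizing l with
  | nil => simp [S, winv]
  | cons c u ih => rw [mem_rot, ih]; simp [winv]

theorem winv_winv (u : List Bool) : winv (winv u) = u := by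
  simp [winv, Function.comp_def]

theorem winv_append (u v : List Bool) : winv (u ++ v) = winv v ++ winv u := by
  simp [winv]

theorem S_inv {v : List Bool} (h : C.S v) : C.S (winv v) := by
  have h1 := C.reflect_mem _ h
  have : reflect (blk [] v) = blk v [] := by
    apply eq_blk'
    · exact comap_top' _
    · exact List.ofFn_get v
    · rfl
  rw [this, mem_iff_S] at h1
  simpa using h1

theorem comp_mem (a b d : List Bool) (hb : b ≠ []) (h1 : blk a b ∈ C.mem)
    (h2 : blk b d ∈ C.mem) : blk a d ∈ C.mem := by
  have h3 := C.vcomp_mem _ _ rfl h1 h2 (fun j => rfl)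
  have : vcomp (blk a b) (blk b d) rfl = blk a d := by
    apply eq_blk'
    · apply vcomp_rel_top
      · rfl
      · intro i
        exact ⟨⟨0, List.length_pos_iff.2 hb⟩, trivial⟩
    · exact List.ofFn_get a
    · exact List.ofFn_get d
  rwa [this] at h3

theorem tcomp_mem (a b c d e : List Bool) (hb : b ≠ []) (hd : d ≠ []) (h1 : blk a b ∈ C.mem)
    (h2 : blk c d ∈ C.mem) (h3 : blk (b ++ d) e ∈ C.mem) : blk (a ++ c) e ∈ C.mem := by
  have hl : (tensor (blk a b) (blk c d)).l = (blk (b ++ d) e).k := by simp [tensor, blk]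
  have h4 := C.vcomp_mem _ _ hl (C.tensor_mem _ _ h1 h2) h3 (fun j => elim_get b d j)
  have : vcomp (tensor (blk a b) (blk c d)) (blk (b ++ d) e) hl = blk (a ++ c) e := by
    apply eq_blk'
    · apply vcomp_rel_top
      · rfl
      · intro i
        obtain ⟨x, rfl⟩ := finSumFinEquiv.surjective i
        cases x with
        | inl i =>
          refine ⟨finSumFinEquiv (Sum.inl ⟨0, List.length_pos_iff.2 hb⟩), ?_⟩
          change Sum.LiftRel _ _
            (Equiv.sumSumSumComm _ _ _ _
              (Sum.inl (finSumFinEquiv.symm (finSumFinEquiv (Sum.inl i)))))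
            (Equiv.sumSumSumComm _ _ _ _
              (Sum.inr (finSumFinEquiv.symm (finSumFinEquiv (Sum.inl ⟨0, _⟩)))))
          rw [Equiv.symm_apply_apply, Equiv.symm_apply_apply]
          refine Sum.LiftRel.inl (show (⊤ : Setoid _).r _ _ from trivial)
        | inr i =>
          refine ⟨finSumFinEquiv (Sum.inr ⟨0, List.length_pos_iff.2 hd⟩), ?_⟩
          change Sum.LiftRel _ _
            (Equiv.sumSumSumComm _ _ _ _
              (Sum.inl (finSumFinEquiv.symm (finSumFinEquiv (Sum.inr i)))))
            (Equiv.sumSumSumComm _ _ _ _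
              (Sum.inr (finSumFinEquiv.symm (finSumFinEquiv (Sum.inr ⟨0, _⟩)))))
          rw [Equiv.symm_apply_apply, Equiv.symm_apply_apply]
          refine Sum.LiftRel.inr (show (⊤ : Setoid _).r _ _ from trivial)
    · have : (vcomp (tensor (blk a b) (blk c d)) (blk (b ++ d) e) hl).uc
          = fun j => (a ++ c).get (Fin.cast (by simp [vcomp, tensor, blk]) j) := by
        funext j
        exact elim_get a c j
      rw [this]
      apply List.ext_getElem
      · simp [vcomp, tensor, blk]
      · intro n h1 h2
        simp
    · exact List.ofFn_get e
  rwa [this] at h4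

theorem splice (x b d : List Bool) (hb : b ≠ []) (h1 : C.S (x ++ b)) (h2 : C.S (winv b ++ d)) :
    C.S (x ++ d) := by
  have := C.comp_mem (winv x) b d hb ((C.mem_iff_S _ _).2 (by rwa [winv_winv]))
    ((C.mem_iff_S _ _).2 h2)
  rw [mem_iff_S, winv_winv] at this
  exact this

theorem rot1 (hid : ∀ c, C.S [c, !c]) (v : List Bool) (c : Bool) (h : C.S (v ++ [c])) : C.S (c :: v) := by
  have := C.tcomp_mem (winv v) [c] [!c] [!c] [] (by simp) (by simp)
    ((C.mem_iff_S _ _).2 (by rwa [winv_winv]))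
    ((C.mem_iff_S _ _).2 (by simpa [winv] using hid c))
    ((C.mem_iff_S _ _).2 (by simpa [winv] using hid c))
  rw [mem_iff_S, winv_append, winv_winv] at this
  simpa [winv] using this

theorem rot (hid : ∀ c, C.S [c, !c]) (x y : List Bool) (h : C.S (x ++ y)) : C.S (y ++ x) := by
  induction y using List.reverseRecOn generalizing x with
  | nil => simpa using h
  | append_singleton y c ih =>
    have := ih (c :: x) (by simpa using C.rot1 hid (x ++ y) c (by simpa using h))
    simpa using this

theorem S_nil (hid : ∀ c, C.S [c, !c]) : C.S [] := by
  exact C.splice [] [true, false] [] (by simp) (hid true) (by simpa [winv] using hid true)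

theorem S_concat (hid : ∀ c, C.S [c, !c]) (h4 : ∀ c d, C.S [!c, c, d, !d])
    (u v : List Bool) (hu : C.S u) (hv : C.S v) : C.S (u ++ v) := by
  rcases List.eq_nil_or_concat u with rfl | ⟨u', c, rfl⟩
  · simpa using hv
  rcases v with _ | ⟨d, v'⟩
  · simpa using hu
  have h1 : C.S ([!c, c, d] ++ v') :=
    C.splice [!c, c, d] [!d] v' (by simp) (by simpa using h4 c d) (by simpa [winv] using hv)
  have h2 := C.splice u' [c] (c :: d :: v') (by simp) (by simpa using hu)
    (by simpa [winv] using h1)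
  simpa using h2

theorem S_insert (hid : ∀ c, C.S [c, !c]) (h4 : ∀ c d, C.S [!c, c, d, !d])
    (x y : List Bool) (c : Bool) (h : C.S (x ++ y)) : C.S (x ++ c :: (!c) :: y) := by
  have h1 := C.S_concat hid h4 _ _ (C.rot hid _ _ h) (hid c)
  have h2 := C.rot hid y (x ++ [c, !c]) (by simpa using h1)
  simpa using h2

/-- Exponent sum of a word. -/
def val (v : List Bool) : ℤ := (v.map (fun c => if c then (1 : ℤ) else -1)).sum

/-- Canonical word of exponent sum `m`. -/
def can (m : ℤ) : List Bool := List.replicate m.natAbs (decide (0 < m))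

theorem val_append (u v : List Bool) : val (u ++ v) = val u + val v := by
  simp [val]

theorem val_winv (u : List Bool) : val (winv u) = - val u := by
  induction u with
  | nil => simp [val, winv]
  | cons c u ih =>
    have : winv (c :: u) = winv u ++ [!c] := by simp [winv]
    rw [this, val_append, ih]
    cases c <;> simp [val]

theorem val_can (m : ℤ) : val (can m) = m := by
  rcases lt_trichotomy 0 m with h | h | h
  · simp [val, can, h]; omega
  · subst h; simp [val, can]
  · simp [val, can, not_lt.2 h.le, abs_of_neg h]

theorem can_succ (m : ℤ) (h : 0 ≤ m) : can (m + 1) = true :: can m := by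
  obtain ⟨n, rfl⟩ := Int.eq_ofNat_of_zero_le h
  rcases n with _ | n
  · simp [can]
  · have h1 : ((n + 1 : ℕ) : ℤ).natAbs = n + 1 := by omega
    have h2 : (((n + 1 : ℕ) : ℤ) + 1).natAbs = n + 1 + 1 := by omega
    have h3 : (0 : ℤ) < ((n + 1 : ℕ) : ℤ) := by omega
    have h4 : (0 : ℤ) < ((n + 1 : ℕ) : ℤ) + 1 := by omega
    simp only [can, h1, h2, h3, h4, decide_true]
    rfl

theorem can_pred (m : ℤ) (h : m ≤ 0) : can (m - 1) = false :: can m := by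
  have h1 : (m - 1).natAbs = m.natAbs + 1 := by omega
  have h2 : ¬ (0 < m - 1) := by omega
  have h3 : ¬ (0 < m) := by omega
  simp only [can, h1, h2, h3, decide_false]
  rfl

theorem S_can (hid : ∀ c, C.S [c, !c]) (h4 : ∀ c d, C.S [!c, c, d, !d])
    (v : List Bool) : C.S (v ++ can (- val v)) := by
  induction v using List.reverseRecOn with
  | nil => simpa [val, can] using C.S_nil hid
  | append_singleton v c ih =>
    rw [val_append]
    generalize val v = n at ih
    cases c with
    | true =>
      have e : -(n + val [true]) = -n - 1 := by simp [val]; ring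
      rw [e]
      by_cases h : -n ≤ 0
      · rw [can_pred _ h]
        simpa using C.S_insert hid h4 v _ true ih
      · have := can_succ (-n - 1) (by omega)
        rw [show -n - 1 + 1 = -n by ring] at this
        rw [this] at ih
        simpa using ih
    | false =>
      have e : -(n + val [false]) = -n + 1 := by simp [val]; ring
      rw [e]
      by_cases h : 0 ≤ -n
      · rw [can_succ _ h]
        simpa using C.S_insert hid h4 v _ false ih
      · have := can_pred (-n + 1) (by omega)
        rw [show -n + 1 - 1 = -n by ring] at this
        rw [this] at ih
        simpa using ih

theorem S_zero (hid : ∀ c, C.S [c, !c]) (h4 : ∀ c d, C.S [!c, c, d, !d])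
    (v : List Bool) (hv : val v = 0) : C.S v := by
  have := C.S_can hid h4 v
  rw [hv] at this
  simpa [can] using this

theorem S_congr (hid : ∀ c, C.S [c, !c]) (h4 : ∀ c d, C.S [!c, c, d, !d])
    (u v : List Bool) (h : val u = val v) (hu : C.S u) : C.S v := by
  by_cases hn : u = []
  · subst hn
    exact C.S_zero hid h4 v (by rw [← h]; simp [val])
  · exact C.splice [] u v hn (by simpa using hu)
      (C.S_zero hid h4 _ (by rw [val_append, val_winv]; omega))

theorem vcomp_gen_inv {p q : CPartition} {h : p.l = q.k} {T : Type}
    (f : Fin p.k ⊕ (Fin p.l ⊕ Fin q.l) → T)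
    (h1 : ∀ a b, p.rel.r a b → f (Sum.map id Sum.inl a) = f (Sum.map id Sum.inl b))
    (h2 : ∀ a b, q.rel.r a b → f (Sum.inr (Sum.map (Fin.cast h.symm) id a)) =
      f (Sum.inr (Sum.map (Fin.cast h.symm) id b)))
    (x y) (hxy : (vcomp p q h).rel.r x y) :
    f (Sum.map id Sum.inr x) = f (Sum.map id Sum.inr y) := by
  have key : ∀ x y, Relation.EqvGen (fun x y : Fin p.k ⊕ (Fin p.l ⊕ Fin q.l) =>
      (∃ a b, p.rel.r a b ∧ Sum.map id Sum.inl a = x ∧ Sum.map id Sum.inl b = y) ∨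
      (∃ a b, q.rel.r a b ∧
        Sum.inr (Sum.map (Fin.cast h.symm) id a) = x ∧
        Sum.inr (Sum.map (Fin.cast h.symm) id b) = y)) x y → f x = f y := by
    intro x y hxy
    induction hxy with
    | rel x y hr =>
      rcases hr with ⟨a, b, hab, rfl, rfl⟩ | ⟨a, b, hab, rfl, rfl⟩
      · exact h1 _ _ hab
      · exact h2 _ _ hab
    | refl => rfl
    | symm _ _ _ ih => exact ih.symm
    | trans _ _ _ _ _ ih1 ih2 => exact ih1.trans ih2
  exact key _ _ hxy

theorem reflect_reflect (r : CPartition) : reflect (reflect r) = r := by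
  have : Setoid.comap Sum.swap (Setoid.comap Sum.swap r.rel) = r.rel := by
    ext x y
    simp [Setoid.comap_rel]
  unfold reflect
  simp only [this]

theorem upper_rel (r : CPartition) (h : (vcomp r (reflect r) rfl).rel = ⊤) (i j : Fin r.k) :
    r.rel.r (Sum.inl i) (Sum.inl j) := by
  have hr := Setoid.eq_top_iff.1 h (Sum.inl i) (Sum.inl j)
  have := vcomp_gen_inv (p := r) (q := reflect r) (h := rfl)
    (Sum.elim (fun i => Quotient.mk r.rel (Sum.inl i))
      (Sum.elim (fun i => Quotient.mk r.rel (Sum.inr i)) (fun i => Quotient.mk r.rel (Sum.inl i))))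
    (by
      intro a b hab
      have := Quotient.sound (s := r.rel) hab
      rcases a with a | a <;> rcases b with b | b <;> exact this)
    (by
      intro a b hab
      have := Quotient.sound (s := r.rel) (a := Sum.swap a) (b := Sum.swap b) hab
      rcases a with a | a <;> rcases b with b | b <;> exact this)
    _ _ hr
  exact Quotient.exact this

theorem through_rel (r : CPartition) (h : (vcomp r (reflect r) rfl).rel = ⊤) (i : Fin r.k) :
    ∃ j, r.rel.r (Sum.inl i) (Sum.inr j) := by
  have hr := Setoid.eq_top_iff.1 h (Sum.inl i) (Sum.inr i)
  have := vcomp_gen_inv (p := r) (q := reflect r) (h := rfl) (T := Prop)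
    (Sum.elim (fun i => ∃ j, r.rel.r (Sum.inl i) (Sum.inr j)) (fun _ => True))
    (by
      intro a b hab
      rcases a with a | a <;> rcases b with b | b
      · apply propext
        constructor
        · rintro ⟨j, hj⟩
          exact ⟨j, r.rel.iseqv.trans (r.rel.iseqv.symm hab) hj⟩
        · rintro ⟨j, hj⟩
          exact ⟨j, r.rel.iseqv.trans hab hj⟩
      · exact eq_true ⟨_, hab⟩
      · exact (eq_true ⟨_, r.rel.iseqv.symm hab⟩).symm
      · rfl)
    (by intro a b hab; rfl)
    _ _ hr
  exact of_eq_true this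

theorem equivIn_iff (u v : List Bool) (hu : u ≠ []) (hv : v ≠ []) :
    EquivIn C.mem (blk u u) (blk v v) ↔ C.S (winv u ++ v) := by
  rw [← mem_iff_S]
  constructor
  · rintro ⟨r, hr, h1, h2⟩
    have e1 := rel_top_of_eq h1 rfl
    have e2 := rel_top_of_eq h2 rfl
    have w1 : List.ofFn r.uc = u :=
      (congrArg (fun p : CPartition => List.ofFn p.uc) h1).trans (List.ofFn_get u)
    have w2 : List.ofFn r.lc = v :=
      (congrArg (fun p : CPartition => List.ofFn p.uc) h2).trans (List.ofFn_get v)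
    have e3 : ∀ s (_ : s = r) (hk : r.k = s.k), (vcomp (reflect r) s hk).rel = ⊤ := by
      rintro _ rfl _
      exact e2
    have e4 := e3 _ (reflect_reflect r) rfl
    have ht : r.rel = ⊤ := by
      have hup := upper_rel r e1
      have hlow : ∀ i j, r.rel.r (Sum.inr i) (Sum.inr j) := upper_rel (reflect r) e4
      have hth := through_rel r e1
      have hmix : ∀ i j, r.rel.r (Sum.inl i) (Sum.inr j) := fun i j => by
        obtain ⟨j', hj'⟩ := hth i
        exact r.rel.iseqv.trans hj' (hlow _ _)
      rw [Setoid.eq_top_iff]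
      rintro (i | i) (j | j)
      · exact hup _ _
      · exact hmix _ _
      · exact r.rel.iseqv.symm (hmix _ _)
      · exact hlow _ _
    rwa [eq_blk' r ht u v w1 w2] at hr
  · intro h
    refine ⟨_, h, ?_, ?_⟩
    · apply eq_blk'
      · apply vcomp_rel_top
        · exact comap_top' _
        · intro i
          exact ⟨⟨0, List.length_pos_iff.2 hv⟩, trivial⟩
      · exact List.ofFn_get u
      · exact List.ofFn_get u
    · apply eq_blk'
      · apply vcomp_rel_top
        · rfl
        · intro i
          exact ⟨⟨0, List.length_pos_iff.2 hu⟩, trivial⟩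
      · exact List.ofFn_get v
      · exact List.ofFn_get v

/-- The row word of `π_k`. -/
def wd (k : ℤ) : List Bool := if k = 0 then [true, false] else can k

theorem wd_ne (k : ℤ) : wd k ≠ [] := by
  unfold wd
  split_ifs with h
  · simp
  · simp [can, h]

theorem val_wd (k : ℤ) : val (wd k) = k := by
  unfold wd
  split_ifs with h
  · simp [val, h]
  · exact val_can k

theorem piZ_eq (k : ℤ) : piZ k = blk (can k) (can k) := by
  apply eq_blk'
  · rfl
  · exact List.ofFn_const _ _
  · exact List.ofFn_const _ _

theorem pi0_eq : pi0plus = blk [true, false] [true, false] := by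
  apply eq_blk'
  · rfl
  · simp [pi0plus]
  · simp [pi0plus]

theorem piZ'_eq (k : ℤ) : piZ' k = blk (wd k) (wd k) := by
  unfold piZ' wd
  split_ifs
  · exact pi0_eq
  · exact piZ_eq k

end PartitionCategory

open PartitionCategory

/-- if `C` is a category of noncrossing colored partitions with
`I(C) = ℤ \ {0}` and `π_{0⁺} ∈ C`, then the set `S(C)` of equivalence classes of
one-block projective partitions of `C`, with fusion `[k]∗[k'] = [k+k']` and
involution `[k] ↦ [-k]`, is a quotient group of `ℤ`, i.e. `ℤ_s` for some
`s ∈ {1, 2, …} ∪ {∞}` : there is an additive subgroup `H ≤ ℤ` such that every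
one-block projective partition of `C` is equivalent to some `π_k` (`k ∈ ℤ`,
`π_0 := π_{0⁺}`) and `π_k ∼ π_{k'}` iff `k - k' ∈ H`. -/
theorem SC_is_quotient_of_Z (C : PartitionCategory)
    (hnc : ∀ p ∈ C.mem, p.NonCrossing)
    (hI : ∀ k : ℤ, k ≠ 0 → piZ k ∈ C.mem) (h0 : pi0plus ∈ C.mem) :
    ∃ H : AddSubgroup ℤ,
      (∀ p ∈ C.mem, p.IsProjective → p.rel = ⊤ → 0 < p.k →
        ∃ k : ℤ, EquivIn C.mem p (piZ' k)) ∧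
      (∀ k k' : ℤ, EquivIn C.mem (piZ' k) (piZ' k') ↔ k - k' ∈ H) := by
  have hp : ∀ k : ℤ, k ≠ 0 → C.S (winv (can k) ++ can k) := fun k hk => by
    rw [← mem_iff_S, ← piZ_eq]; exact hI k hk
  have hid : ∀ c, C.S [c, !c] := by
    intro c
    cases c
    · simpa [winv, can] using hp 1 (by simp)
    · simpa [winv, can] using hp (-1) (by simp)
  have h5 : C.S [true, false, true, false] := by
    rw [pi0_eq, mem_iff_S] at h0
    simpa [winv] using h0
  have h6 : C.S [false, false, true, true] := by
    simpa [winv, can, List.replicate] using hp 2 (by simp)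
  have h4 : ∀ c d, C.S [!c, c, d, !d] := by
    rintro (_ | _) (_ | _)
    · exact C.rot hid [false, false, true] [true] h6
    · exact h5
    · exact C.rot1 hid [true, false, true] false h5
    · exact C.rot hid [false] [false, true, true] h6
  let H : AddSubgroup ℤ :=
    { carrier := {n | ∃ v, C.S v ∧ val v = n}
      zero_mem' := ⟨[], C.S_nil hid, by simp [val]⟩
      add_mem' := by
        rintro _ _ ⟨u, hu, rfl⟩ ⟨v, hv, rfl⟩
        exact ⟨u ++ v, C.S_concat hid h4 u v hu hv, val_append u v⟩
      neg_mem' := by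
        rintro _ ⟨u, hu, rfl⟩
        exact ⟨winv u, C.S_inv hu, val_winv u⟩ }
  refine ⟨H, ?_, ?_⟩
  · intro p hpC hproj htop hpos
    obtain ⟨_, _, hrefl⟩ := hproj
    have e : List.ofFn p.lc = List.ofFn p.uc :=
      congrArg (fun p : CPartition => List.ofFn p.uc) hrefl
    have hpe := eq_blk' p htop (List.ofFn p.uc) (List.ofFn p.uc) rfl e
    have hne : List.ofFn p.uc ≠ [] := by
      rw [← List.length_pos_iff]; simpa using hpos
    generalize List.ofFn p.uc = u at hpe hne
    refine ⟨val u, ?_⟩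
    rw [hpe, piZ'_eq, C.equivIn_iff _ _ hne (wd_ne _)]
    apply C.S_zero hid h4
    rw [val_append, val_winv, val_wd]; omega
  · intro k k'
    rw [piZ'_eq, piZ'_eq, C.equivIn_iff _ _ (wd_ne _) (wd_ne _), ← H.neg_mem_iff]
    have e : val (winv (wd k) ++ wd k') = -(k - k') := by
      rw [val_append, val_winv, val_wd, val_wd]; ring
    constructor
    · intro h
      exact ⟨_, h, e⟩
    · rintro ⟨v, hv, hv'⟩
      exact C.S_congr hid h4 v _ (hv'.trans e.symm) hv
end
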